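/- arXiv:1305.5273 — 2 statements merged into one kernel-verified Lean document; each statement's English description precedes it below -/
import Mathlib

section
/- Let u be a λ-mode solution whose initial data (φ,ψ) are smooth on (2M,∞), vanish for r ≥ R₀ (for some R₀ > 2M), and vanish to infinite order at r = 2M together with all derivatives: for all k, N ∈ ℕ there is a constant C with |φ^{(k)}(r)| ≤ C·(r−2M)^N and |ψ^{(k)}(r)| ≤ C·(r−2M)^N for all r ∈ (2M, 2M+1). Then the rescaled solution extends smoothly to the event horizon: there exists W : ℝ² → ℝ that is infinitely differentiable on [0, e^{−1}) × (0,∞) (in the sense of ContDiffOn, with all within-derivatives extending continuously up to the boundary {a = 0}) and satisfies W(a,b) = Ũ(a,b) for all a ∈ (0, e^{−1}) and b > 0. (Smoothness up to the event horizon for data Schwartz at r = 2M, for a single spherical-harmonic mode.) -/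
/-! In the ingoing Eddington–Finkelstein coordinates `(v, r)`, `v = t + r_*`, the horizon is the
regular hypersurface `r = 2M`, and the blown-up coordinates `(a, b)` are given by
`v = 4M log b`, `r = 2M + a b²`, which is smooth up to `a = 0`. It therefore suffices to extend
`w(v, r) = u(v - r_*, r)` smoothly to `r ≥ 2M`, and for this it suffices to bound every mixed
derivative `∂_r^k ∂_v^j w` near the horizon (`smooth_extendFrom`): each derivative is then locally
Lipschitz, so it has limits at the horizon, and by the mean value theorem the limits of the
derivatives are the derivatives of the limit.

The bounds (`horizonBdd_derXT`) come from three facts.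

* On the initial slice `t = 0` all the derivatives `∂_r^k ∂_v^j w` vanish to infinite order at
  `r = 2M` (`flat_derXT`). The change of frame and the equation only introduce powers of
  `1/(r-2M)`, which are harmless for data of this kind.
* `∂_v` is a symmetry of the equation, so each `∂_v^j w` is again a solution; with
  `L = ∂_t + ∂_{r_*}`, `Ψ = r ∂_v^j w` and `p = LΨ`, the equation becomes
  `∂_r p = (λ²/r² + 2M/r³) Ψ`. A bootstrap with the weight `exp(γ e^{v/2M})` bounds `Ψ` up to the
  horizon (`base_bound`); the point is that an ingoing ray at advanced time `v` starts at a
  distance `r - 2M ≤ e^{v/2M}`, which makes up for the factor `r/(r-2M)` along outgoing rays.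
* Applying `∂_r^k` to the equation (`wave_derXT`) gives a transport equation for
  `∂_r^{k+1} ∂_v^j w` along outgoing rays, with sources of lower order in `∂_r`; the red-shift
  gives its zeroth-order term a damping sign (`transport_le`). This is the step of an induction
  on `k`.
-/

open MeasureTheory Filter Set Function
open scoped ContDiff

/-- The tortoise coordinate `r_* = r + 2M log(r - 2M)`. -/
noncomputable def rstar (M r : ℝ) : ℝ := r + 2*M*Real.log (r - 2*M)

/-- Partial derivative of `u` in the first (time) variable. -/
noncomputable def pdt (u : ℝ → ℝ → ℝ) (t r : ℝ) : ℝ := deriv (fun s => u s r) t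

/-- Second partial derivative of `u` in the first (time) variable. -/
noncomputable def pdtt (u : ℝ → ℝ → ℝ) (t r : ℝ) : ℝ := deriv (fun s => pdt u s r) t

/-- Partial derivative of `u` in the second (radial) variable. -/
noncomputable def pdr (u : ℝ → ℝ → ℝ) (t r : ℝ) : ℝ := deriv (fun s => u t s) r

/-- Second partial derivative of `u` in the second (radial) variable. -/
noncomputable def pdrr (u : ℝ → ℝ → ℝ) (t r : ℝ) : ℝ := deriv (fun s => pdr u t s) r

/-- `u(t,r)` is a λ-mode solution of the wave equation on the mass-`M`
Schwarzschild exterior: it is smooth on `ℝ × (2M,∞)` and satisfies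
`−(r/(r−2M))·∂²ₜu + ((r−2M)/r)·∂²ᵣu + (2(r−M)/r²)·∂ᵣu − (λ²/r²)·u = 0` there. -/
def IsModeSolution (M lam : ℝ) (u : ℝ → ℝ → ℝ) : Prop :=
  ContDiffOn ℝ ∞ (Function.uncurry u) ((Set.univ : Set ℝ) ×ˢ Set.Ioi (2*M)) ∧
  ∀ t r : ℝ, 2*M < r →
    -(r/(r-2*M)) * pdtt u t r + ((r-2*M)/r) * pdrr u t r
      + (2*(r-M)/r^2) * pdr u t r - lam^2/r^2 * u t r = 0

/-- The horizon-rescaled solution in the blown-up coordinates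
`a = e^{−(t+r)/(2M)}`, `b = e^{(t+r)/(4M)}·√(r−2M)`:
`Ũ(a,b) = 2√M·b·u(−2M·log a − 2M − a·b², 2M + a·b²)`. -/
noncomputable def Utilde (M : ℝ) (u : ℝ → ℝ → ℝ) (a b : ℝ) : ℝ :=
  2 * Real.sqrt M * b * u (-(2*M)*Real.log a - 2*M - a*b^2) (2*M + a*b^2)

/-! ### Ingoing coordinates and derivatives -/

/-- The Schwarzschild exterior `r > 2M` in the ingoing Eddington–Finkelstein coordinates `(v,r)`,
`v = t + r_*`. -/
def extSet (M : ℝ) : Set (ℝ × ℝ) := {p | 2*M < p.2}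

/-- The derivative `∂_v` (the stationary Killing field) of a function of `(v,r)`. -/
noncomputable def opT (g : ℝ × ℝ → ℝ) (p : ℝ × ℝ) : ℝ := fderiv ℝ g p (1, 0)

/-- The derivative `∂_r` at fixed `v` (the ingoing null field) of a function of `(v,r)`. -/
noncomputable def opX (g : ℝ × ℝ → ℝ) (p : ℝ × ℝ) : ℝ := fderiv ℝ g p (0, 1)

/-- Iterated `∂_v`-derivatives. -/
noncomputable def derT (w : ℝ × ℝ → ℝ) : ℕ → ℝ × ℝ → ℝ
  | 0 => w
  | j + 1 => opT (derT w j)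

/-- The mixed derivatives `derXT w k j = ∂_r^k ∂_v^j w`. -/
noncomputable def derXT (w : ℝ × ℝ → ℝ) : ℕ → ℕ → ℝ × ℝ → ℝ
  | 0, j => derT w j
  | k + 1, j => opX (derXT w k j)

/-- The solution `u(t,r)` written in ingoing coordinates: `w(v,r) = u(v - r_*(r), r)`. -/
noncomputable def efw (M : ℝ) (u : ℝ → ℝ → ℝ) (p : ℝ × ℝ) : ℝ := u (p.1 - rstar M p.2) p.2

lemma isOpen_extSet (M : ℝ) : IsOpen (extSet M) :=
  isOpen_lt continuous_const continuous_snd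

lemma smooth_opT {M : ℝ} {g : ℝ × ℝ → ℝ} (hg : ContDiffOn ℝ ∞ g (extSet M)) :
    ContDiffOn ℝ ∞ (opT g) (extSet M) :=
  (hg.fderiv_of_isOpen (isOpen_extSet M) (m := ∞) (by simp)).clm_apply contDiffOn_const

lemma smooth_opX {M : ℝ} {g : ℝ × ℝ → ℝ} (hg : ContDiffOn ℝ ∞ g (extSet M)) :
    ContDiffOn ℝ ∞ (opX g) (extSet M) :=
  (hg.fderiv_of_isOpen (isOpen_extSet M) (m := ∞) (by simp)).clm_apply contDiffOn_const

lemma smooth_derT {M : ℝ} {w : ℝ × ℝ → ℝ} (hw : ContDiffOn ℝ ∞ w (extSet M)) (j : ℕ) :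
    ContDiffOn ℝ ∞ (derT w j) (extSet M) := by
  induction j with
  | zero => exact hw
  | succ j ih => exact smooth_opT ih

lemma smooth_derXT {M : ℝ} {w : ℝ × ℝ → ℝ} (hw : ContDiffOn ℝ ∞ w (extSet M)) (k j : ℕ) :
    ContDiffOn ℝ ∞ (derXT w k j) (extSet M) := by
  induction k with
  | zero => exact smooth_derT hw j
  | succ k ih => exact smooth_opX ih

lemma diffAt_of_smooth {M : ℝ} {g : ℝ × ℝ → ℝ} (hg : ContDiffOn ℝ ∞ g (extSet M))
    {p : ℝ × ℝ} (hp : p ∈ extSet M) : DifferentiableAt ℝ g p :=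
  (hg.contDiffAt ((isOpen_extSet M).mem_nhds hp)).differentiableAt (by simp)

lemma fderiv_apply_eq (g : ℝ × ℝ → ℝ) (p : ℝ × ℝ) (x y : ℝ) :
    fderiv ℝ g p (x, y) = x * opT g p + y * opX g p := by
  have : ((x, y) : ℝ × ℝ) = x • ((1, 0) : ℝ × ℝ) + y • ((0, 1) : ℝ × ℝ) := by simp
  rw [this, map_add, map_smul, map_smul]
  simp [opT, opX]

lemma opT_opX_comm {M : ℝ} {g : ℝ × ℝ → ℝ} (hg : ContDiffOn ℝ ∞ g (extSet M))
    {p : ℝ × ℝ} (hp : p ∈ extSet M) : opT (opX g) p = opX (opT g) p := by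
  have hc : ContDiffAt ℝ ∞ g p := hg.contDiffAt ((isOpen_extSet M).mem_nhds hp)
  have hs : IsSymmSndFDerivAt ℝ g p :=
    hc.isSymmSndFDerivAt (by
      rw [minSmoothness_of_isRCLikeNormedField]; exact WithTop.coe_le_coe.2 (le_top : (2:ℕ∞) ≤ ⊤))
  have hd : DifferentiableAt ℝ (fderiv ℝ g) p :=
    (hc.fderiv_right (m := 1) (by norm_cast)).differentiableAt (by simp)
  have h1 : opT (opX g) p = fderiv ℝ (fderiv ℝ g) p (1, 0) (0, 1) := by
    unfold opT opX
    rw [fderiv_clm_apply hd (by fun_prop)]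
    simp
  have h2 : opX (opT g) p = fderiv ℝ (fderiv ℝ g) p (0, 1) (1, 0) := by
    unfold opT opX
    rw [fderiv_clm_apply hd (by fun_prop)]
    simp
  rw [h1, h2, hs.eq]

lemma opT_congr {M : ℝ} {f g : ℝ × ℝ → ℝ} (h : EqOn f g (extSet M)) :
    EqOn (opT f) (opT g) (extSet M) := fun p hp => by
  unfold opT
  rw [(h.eventuallyEq_of_mem ((isOpen_extSet M).mem_nhds hp)).fderiv_eq]

lemma opX_congr {M : ℝ} {f g : ℝ × ℝ → ℝ} (h : EqOn f g (extSet M)) :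
    EqOn (opX f) (opX g) (extSet M) := fun p hp => by
  unfold opX
  rw [(h.eventuallyEq_of_mem ((isOpen_extSet M).mem_nhds hp)).fderiv_eq]

lemma opT_derXT {M : ℝ} {w : ℝ × ℝ → ℝ} (hw : ContDiffOn ℝ ∞ w (extSet M)) (k j : ℕ) :
    EqOn (opT (derXT w k j)) (derXT w k (j+1)) (extSet M) := by
  induction k with
  | zero => exact fun p _ => rfl
  | succ k ih =>
    intro p hp
    change opT (opX (derXT w k j)) p = opX (derXT w k (j+1)) p
    rw [opT_opX_comm (smooth_derXT hw k j) hp]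
    exact opX_congr ih hp

/-! ### The tortoise coordinate and null curves -/

lemma hasDerivAt_rstar {M r : ℝ} (hr : 2*M < r) :
    HasDerivAt (rstar M) (r/(r-2*M)) r := by
  have h0 : r - 2*M ≠ 0 := by linarith
  have := ((hasDerivAt_id r).add ((((hasDerivAt_id r).sub_const (2*M)).log h0).const_mul (2*M)))
  refine HasDerivAt.congr_deriv (f' := 1 + 2*M*(1/(r-2*M))) this ?_
  field_simp; ring

lemma continuousOn_rstar (M : ℝ) : ContinuousOn (rstar M) (Ioi (2*M)) :=
  fun _ hr => (hasDerivAt_rstar hr).continuousAt.continuousWithinAt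

lemma rstar_strictMonoOn {M : ℝ} (hM : 0 < M) : StrictMonoOn (rstar M) (Ioi (2*M)) := by
  intro x hx y hy hxy
  simp only [mem_Ioi] at hx hy
  have := Real.log_lt_log (by linarith : 0 < x - 2*M) (by linarith : x - 2*M < y - 2*M)
  unfold rstar
  nlinarith

lemma rstar_le_iff {M x y : ℝ} (hM : 0 < M) (hx : 2*M < x) (hy : 2*M < y) :
    rstar M x ≤ rstar M y ↔ x ≤ y := (rstar_strictMonoOn hM).le_iff_le hx hy

lemma exists_rstar_eq {M : ℝ} (hM : 0 < M) (y : ℝ) : ∃ r, 2*M < r ∧ rstar M r = y := by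
  -- `r_*` is below `y` at `2M + min(e^{(y-2M-1)/2M}, 1)` and above `y` at `max(y,0) + 2M + 1`.
  obtain ⟨b, hb1, hb⟩ : ∃ b, 2*M + 1 ≤ b ∧ y ≤ rstar M b := by
    refine ⟨max y 0 + 2*M + 1, by linarith [le_max_right y 0], ?_⟩
    have := Real.log_nonneg (by linarith [le_max_right y 0] : 1 ≤ max y 0 + 2*M + 1 - 2*M)
    unfold rstar
    nlinarith [le_max_left y 0]
  obtain ⟨a, ha0, ha1, ha⟩ : ∃ a, 2*M < a ∧ a ≤ 2*M + 1 ∧ rstar M a ≤ y := by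
    have hexp := Real.exp_pos ((y - 2*M - 1)/(2*M))
    refine ⟨2*M + min (Real.exp ((y - 2*M - 1)/(2*M))) 1, ?_, ?_, ?_⟩
    · have := lt_min hexp one_pos
      linarith
    · linarith [min_le_right (Real.exp ((y - 2*M - 1)/(2*M))) 1]
    · unfold rstar
      have h1 := Real.log_le_log (lt_min hexp one_pos)
        (min_le_left (Real.exp ((y - 2*M - 1)/(2*M))) 1)
      rw [Real.log_exp] at h1
      have h2 : 2*M*((y - 2*M - 1)/(2*M)) = y - 2*M - 1 := by field_simp
      have h3 := mul_le_mul_of_nonneg_left h1 (by linarith : 0 ≤ 2*M)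
      have h4 := min_le_right (Real.exp ((y - 2*M - 1)/(2*M))) 1
      rw [show 2*M + min (Real.exp ((y - 2*M - 1)/(2*M))) 1 - 2*M
        = min (Real.exp ((y - 2*M - 1)/(2*M))) 1 by ring]
      linarith
  have hsub : Icc a b ⊆ Ioi (2*M) := fun x hx => lt_of_lt_of_le ha0 hx.1
  obtain ⟨r, hr, hr'⟩ := intermediate_value_Icc (by linarith : a ≤ b)
    ((continuousOn_rstar M).mono hsub) ⟨ha, hb⟩
  exact ⟨r, hsub hr, hr'⟩

/-- Chain rule along `v = c + m r_*(r)`: `m = 0` is an ingoing null ray, `m = 1` a slice of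
constant `t = c`, and `m = 2` an outgoing null ray. -/
lemma hasDerivAt_curve {M : ℝ} {g : ℝ × ℝ → ℝ} (hg : ContDiffOn ℝ ∞ g (extSet M)) (c m : ℝ)
    {r : ℝ} (hr : 2*M < r) :
    HasDerivAt (fun ρ => g (c + m * rstar M ρ, ρ))
      (m * (r/(r-2*M)) * opT g (c + m * rstar M r, r) + opX g (c + m * rstar M r, r)) r := by
  have hp : (c + m * rstar M r, r) ∈ extSet M := hr
  have h1 : HasDerivAt (fun ρ => (c + m * rstar M ρ, ρ)) (m * (r/(r-2*M)), (1:ℝ)) r :=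
    (((hasDerivAt_rstar hr).const_mul m).const_add c).prodMk (hasDerivAt_id r)
  have h2 := HasFDerivAt.comp_hasDerivAt (f := fun ρ => (c + m * rstar M ρ, ρ)) r
    (diffAt_of_smooth hg hp).hasFDerivAt h1
  rw [fderiv_apply_eq, one_mul] at h2
  exact h2

lemma hasDerivAt_v {M : ℝ} {g : ℝ × ℝ → ℝ} (hg : ContDiffOn ℝ ∞ g (extSet M))
    {v r : ℝ} (hr : 2*M < r) : HasDerivAt (fun s => g (s, r)) (opT g (v, r)) v := by
  have h1 : HasDerivAt (fun s : ℝ => (s, r)) (1, (0:ℝ)) v :=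
    (hasDerivAt_id v).prodMk (hasDerivAt_const v r)
  have hp : (v, r) ∈ extSet M := hr
  exact (diffAt_of_smooth hg hp).hasFDerivAt.comp_hasDerivAt v h1

lemma hasDerivAt_r {M : ℝ} {g : ℝ × ℝ → ℝ} (hg : ContDiffOn ℝ ∞ g (extSet M))
    {v r : ℝ} (hr : 2*M < r) : HasDerivAt (fun s => g (v, s)) (opX g (v, r)) r := by
  simpa using hasDerivAt_curve hg v 0 hr

/-! ### The wave equation in ingoing coordinates -/

lemma smooth_efw {M lam : ℝ} {u : ℝ → ℝ → ℝ} (hu : IsModeSolution M lam u) :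
    ContDiffOn ℝ ∞ (efw M u) (extSet M) := by
  have h1 : ContDiffOn ℝ ∞ (fun p : ℝ × ℝ => (p.1 - rstar M p.2, p.2)) (extSet M) := by
    unfold rstar
    refine ContDiffOn.prodMk (contDiffOn_fst.sub (contDiffOn_snd.add (contDiffOn_const.mul
      (ContDiffOn.log (contDiffOn_snd.sub contDiffOn_const) ?_)))) contDiffOn_snd
    intro p hp
    have : 2*M < p.2 := hp
    linarith
  exact hu.1.comp h1 (fun p hp => ⟨mem_univ _, hp⟩)

lemma u_eq_efw (M : ℝ) (u : ℝ → ℝ → ℝ) (t r : ℝ) : u t r = efw M u (t + 1 * rstar M r, r) := by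
  simp [efw]

lemma pdt_eq {M lam : ℝ} {u : ℝ → ℝ → ℝ} (hu : IsModeSolution M lam u) (t : ℝ) {r : ℝ}
    (hr : 2*M < r) : pdt u t r = opT (efw M u) (t + 1 * rstar M r, r) := by
  unfold pdt
  simp_rw [u_eq_efw M u]
  exact ((hasDerivAt_v (smooth_efw hu) hr (v := t + 1 * rstar M r)).comp_add_const t _).deriv

/-- The mode equation in ingoing coordinates, multiplied by `r²`; its coefficients are
polynomials in `r`, regular at `r = 2M`. -/
lemma wave_efw {M lam : ℝ} (hM : 0 < M) {u : ℝ → ℝ → ℝ} (hu : IsModeSolution M lam u)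
    {p : ℝ × ℝ} (hp : p ∈ extSet M) :
    (p.2^2 - 2*M*p.2) * opX (opX (efw M u)) p + 2*p.2^2 * opX (opT (efw M u)) p
      + 2*p.2*opT (efw M u) p + 2*(p.2-M) * opX (efw M u) p - lam^2 * efw M u p = 0 := by
  obtain ⟨v, r⟩ := p
  have hr : 2*M < r := hp
  set w := efw M u with hw_def
  have hw : ContDiffOn ℝ ∞ w (extSet M) := smooth_efw hu
  obtain ⟨t, rfl⟩ : ∃ t, v = t + 1 * rstar M r := ⟨v - rstar M r, by ring⟩
  have htt : pdtt u t r = opT (opT w) (t + 1 * rstar M r, r) := by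
    unfold pdtt
    simp_rw [pdt_eq hu _ hr]
    exact ((hasDerivAt_v (smooth_opT hw) hr (v := t + 1 * rstar M r)).comp_add_const t _).deriv
  have hrd : ∀ s, 2*M < s → pdr u t s
      = 1 * (s/(s-2*M)) * opT w (t + 1 * rstar M s, s) + opX w (t + 1 * rstar M s, s) := by
    intro s hs
    unfold pdr
    simp_rw [u_eq_efw M u]
    exact (hasDerivAt_curve hw t 1 hs).deriv
  have h0 : r - 2*M ≠ 0 := by linarith
  have hr0 : r ≠ 0 := by linarith
  have hq : HasDerivAt (fun s : ℝ => 1 * (s/(s-2*M))) (-(2*M)/(r-2*M)^2) r := by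
    have := ((hasDerivAt_id r).div ((hasDerivAt_id r).sub_const (2*M)) h0).const_mul 1
    refine HasDerivAt.congr_deriv (f' := 1 * ((1*(r-2*M) - r*1)/(r-2*M)^2)) this ?_
    ring
  have hrr : pdrr u t r = -(2*M)/(r-2*M)^2 * opT w (t + 1 * rstar M r, r)
      + 1 * (r/(r-2*M)) * (1 * (r/(r-2*M)) * opT (opT w) (t + 1 * rstar M r, r)
        + opX (opT w) (t + 1 * rstar M r, r))
      + (1 * (r/(r-2*M)) * opT (opX w) (t + 1 * rstar M r, r)
        + opX (opX w) (t + 1 * rstar M r, r)) := by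
    unfold pdrr
    have he : (fun s => pdr u t s) =ᶠ[nhds r] fun s =>
        1 * (s/(s-2*M)) * opT w (t + 1 * rstar M s, s) + opX w (t + 1 * rstar M s, s) := by
      filter_upwards [Ioi_mem_nhds hr] with s hs using hrd s hs
    rw [he.deriv_eq]
    exact ((hq.mul (hasDerivAt_curve (smooth_opT hw) t 1 hr)).add
      (hasDerivAt_curve (smooth_opX hw) t 1 hr)).deriv
  have key := hu.2 t r hr
  rw [htt, hrr, hrd r hr, u_eq_efw M u, opT_opX_comm hw hp] at key
  simp only
  generalize opT (opT w) (t + 1 * rstar M r, r) = a1 at *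
  generalize opX (opT w) (t + 1 * rstar M r, r) = a2 at *
  generalize opX (opX w) (t + 1 * rstar M r, r) = a3 at *
  generalize opX w (t + 1 * rstar M r, r) = a4 at *
  generalize opT w (t + 1 * rstar M r, r) = a5 at *
  rw [← hw_def] at key
  generalize w (t + 1 * rstar M r, r) = a6 at *
  have h2 : r^2 * (-(r/(r-2*M)) * a1 + ((r-2*M)/r) * (-(2*M)/(r-2*M)^2 * a5
      + 1 * (r/(r-2*M)) * (1 * (r/(r-2*M)) * a1 + a2) + (1 * (r/(r-2*M)) * a2 + a3))
      + (2*(r-M)/r^2) * (1 * (r/(r-2*M)) * a5 + a4) - lam^2/r^2 * a6)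
      = (r^2 - 2*M*r) * a3 + 2*r^2*a2 + 2*r*a5 + 2*(r-M)*a4 - lam^2*a6 := by
    field_simp
    ring
  rw [← h2, key, mul_zero]

/-- The equation satisfied by `∂_r^k ∂_v^j w`, obtained by applying `∂_r^k ∂_v^j` to the mode
equation. -/
lemma wave_derXT {M lam : ℝ} {w : ℝ × ℝ → ℝ} (hw : ContDiffOn ℝ ∞ w (extSet M))
    (hwave : ∀ p ∈ extSet M, (p.2^2 - 2*M*p.2) * opX (opX w) p + 2*p.2^2 * opX (opT w) p
      + 2*p.2*opT w p + 2*(p.2-M) * opX w p - lam^2 * w p = 0) (k j : ℕ) :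
    ∀ v r : ℝ, 2*M < r →
      (r^2 - 2*M*r) * derXT w (k+2) j (v,r) + 2*r^2 * derXT w (k+1) (j+1) (v,r)
      + 2*(k+1)*(r-M) * derXT w (k+1) j (v,r) + (4*k+2)*r*derXT w k (j+1) (v,r)
      + 2*k^2 * derXT w (k-1) (j+1) (v,r) + (k*(k+1) - lam^2) * derXT w k j (v,r) = 0 := by
  induction k generalizing j with
  | zero =>
    induction j with
    | zero =>
      intro v r hr
      have := hwave (v, r) hr
      simp only [derXT, derT, Nat.cast_zero]
      linear_combination this
    | succ j ih =>
      intro v r hr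
      have hd : ∀ k j, HasDerivAt (fun s => derXT w k j (s, r)) (derXT w k (j+1) (v, r)) v :=
        fun k j => by
          have := hasDerivAt_v (smooth_derXT hw k j) hr (v := v)
          rwa [opT_derXT hw k j (show (v, r) ∈ extSet M from hr)] at this
      have h1 := (((((hd 2 j).const_mul (r^2 - 2*M*r)).add ((hd 1 (j+1)).const_mul (2*r^2))).add
        ((hd 1 j).const_mul (2*(r-M)))).add ((hd 0 (j+1)).const_mul (2*r))).add
        ((hd 0 j).const_mul (-lam^2))
      have h2 := h1.congr_of_eventuallyEq (f₁ := fun _ => (0:ℝ)) (by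
        filter_upwards with s
        have := ih s r hr
        simp at this ⊢
        linear_combination -this)
      have h3 := h2.unique (hasDerivAt_const v (0:ℝ))
      simp
      linear_combination h3
  | succ k ih =>
    intro v r hr
    have hd : ∀ k j, HasDerivAt (fun s => derXT w k j (v, s)) (derXT w (k+1) j (v, r)) r :=
      fun k j => hasDerivAt_r (smooth_derXT hw k j) hr
    have hlow : HasDerivAt (fun s => (2*(k:ℝ)^2) * derXT w (k-1) (j+1) (v, s))
        ((2*(k:ℝ)^2) * derXT w k (j+1) (v, r)) r := by
      rcases k with _ | k
      · simpa using hasDerivAt_const r (0:ℝ)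
      · exact (hd k (j+1)).const_mul _
    have hA : HasDerivAt (fun s : ℝ => s^2 - 2*M*s) (2*r - 2*M) r := by
      refine HasDerivAt.congr_deriv
        ((hasDerivAt_pow 2 r).sub ((hasDerivAt_id r).const_mul (2*M))) ?_
      simp
    have hB : HasDerivAt (fun s : ℝ => 2*s^2) (2*(2*r)) r := by
      simpa using (hasDerivAt_pow 2 r).const_mul 2
    have hC : HasDerivAt (fun s : ℝ => 2*(k+1)*(s-M)) (2*((k:ℝ)+1)) r := by
      simpa using ((hasDerivAt_id r).sub_const M).const_mul (2*((k:ℝ)+1))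
    have hD : HasDerivAt (fun s : ℝ => (4*k+2)*s) (4*(k:ℝ)+2) r := by
      simpa using (hasDerivAt_id r).const_mul (4*(k:ℝ)+2)
    have h1 := (((((hA.mul (hd (k+2) j)).add (hB.mul (hd (k+1) (j+1)))).add
      (hC.mul (hd (k+1) j))).add (hD.mul (hd k (j+1)))).add hlow).add
      ((hd k j).const_mul (k*(k+1) - lam^2))
    have h2 := h1.congr_of_eventuallyEq (f₁ := fun _ => (0:ℝ)) (by
      filter_upwards [Ioi_mem_nhds hr] with s hs
      have := ih j v s hs
      simp at this ⊢
      linear_combination -this)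
    have h3 := h2.unique (hasDerivAt_const r (0:ℝ))
    simp only [Nat.add_sub_cancel, Nat.cast_add, Nat.cast_one]
    linear_combination h3

/-! ### Initial data vanishing to infinite order -/

/-- Functions of `r` built from the derivatives of `φ` and `ψ` by linear combinations and
multiplication by `r`, `1/r` and `1/(r-2M)`. This class is stable under differentiation, and
all its members vanish to infinite order at `r = 2M` when the derivatives of `φ`, `ψ` do. -/
inductive FlatGen (M : ℝ) (φ ψ : ℝ → ℝ) : (ℝ → ℝ) → Prop
  | phi (k : ℕ) : FlatGen M φ ψ (iteratedDeriv k φ)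
  | psi (k : ℕ) : FlatGen M φ ψ (iteratedDeriv k ψ)
  | add {h g : ℝ → ℝ} : FlatGen M φ ψ h → FlatGen M φ ψ g → FlatGen M φ ψ (fun r => h r + g r)
  | smul (c : ℝ) {h : ℝ → ℝ} : FlatGen M φ ψ h → FlatGen M φ ψ (fun r => c * h r)
  | mulr {h : ℝ → ℝ} : FlatGen M φ ψ h → FlatGen M φ ψ (fun r => r * h r)
  | divr {h : ℝ → ℝ} : FlatGen M φ ψ h → FlatGen M φ ψ (fun r => r⁻¹ * h r)
  | divf {h : ℝ → ℝ} : FlatGen M φ ψ h → FlatGen M φ ψ (fun r => (r-2*M)⁻¹ * h r)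

lemma hasDerivAt_iteratedDeriv {M : ℝ} {φ : ℝ → ℝ} (hφ : ContDiffOn ℝ ∞ φ (Ioi (2*M))) (k : ℕ)
    {r : ℝ} (hr : 2*M < r) : HasDerivAt (iteratedDeriv k φ) (iteratedDeriv (k+1) φ r) r := by
  have hd := (hφ.differentiableOn_iteratedDerivWithin (m := k)
    (WithTop.coe_lt_coe.2 (ENat.natCast_lt_top k)) isOpen_Ioi.uniqueDiffOn).congr
    (fun x hx => (iteratedDerivWithin_of_isOpen isOpen_Ioi hx).symm)
  have := (hd.differentiableAt (Ioi_mem_nhds hr)).hasDerivAt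
  rwa [← iteratedDeriv_succ] at this

lemma FlatGen.exists_deriv {M : ℝ} (hM : 0 < M) {φ ψ : ℝ → ℝ}
    (hφ : ContDiffOn ℝ ∞ φ (Ioi (2*M))) (hψ : ContDiffOn ℝ ∞ ψ (Ioi (2*M)))
    {h : ℝ → ℝ} (hh : FlatGen M φ ψ h) :
    ∃ h', FlatGen M φ ψ h' ∧ ∀ r, 2*M < r → HasDerivAt h (h' r) r := by
  induction hh with
  | phi k => exact ⟨_, .phi (k+1), fun r hr => hasDerivAt_iteratedDeriv hφ k hr⟩
  | psi k => exact ⟨_, .psi (k+1), fun r hr => hasDerivAt_iteratedDeriv hψ k hr⟩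
  | add _ _ ih1 ih2 =>
    obtain ⟨h1, g1, d1⟩ := ih1
    obtain ⟨h2, g2, d2⟩ := ih2
    exact ⟨_, g1.add g2, fun r hr => (d1 r hr).add (d2 r hr)⟩
  | smul c _ ih =>
    obtain ⟨h1, g1, d1⟩ := ih
    exact ⟨_, g1.smul c, fun r hr => (d1 r hr).const_mul c⟩
  | mulr g0 ih =>
    obtain ⟨h1, g1, d1⟩ := ih
    refine ⟨_, g0.add g1.mulr, fun r hr => ((hasDerivAt_id r).mul (d1 r hr)).congr_deriv ?_⟩
    simp
  | divr g0 ih =>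
    obtain ⟨h1, g1, d1⟩ := ih
    refine ⟨_, (g0.divr.divr.smul (-1)).add g1.divr, fun r hr =>
      (((hasDerivAt_id r).inv (by simp; linarith)).mul (d1 r hr)).congr_deriv ?_⟩
    simp; field_simp
  | divf g0 ih =>
    obtain ⟨h1, g1, d1⟩ := ih
    refine ⟨_, (g0.divf.divf.smul (-1)).add g1.divf, fun r hr =>
      ((((hasDerivAt_id r).sub_const (2*M)).inv (by simp; linarith)).mul (d1 r hr)).congr_deriv ?_⟩
    simp; field_simp

lemma FlatGen.bound {M : ℝ} (hM : 0 < M) {φ ψ : ℝ → ℝ}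
    (hφ : ∀ k N : ℕ, ∃ C : ℝ, ∀ r ∈ Ioo (2*M) (2*M+1), |iteratedDeriv k φ r| ≤ C * (r - 2*M)^N)
    (hψ : ∀ k N : ℕ, ∃ C : ℝ, ∀ r ∈ Ioo (2*M) (2*M+1), |iteratedDeriv k ψ r| ≤ C * (r - 2*M)^N)
    {h : ℝ → ℝ} (hh : FlatGen M φ ψ h) :
    ∀ N : ℕ, ∃ C : ℝ, ∀ r ∈ Ioo (2*M) (2*M+1), |h r| ≤ C * (r - 2*M)^N := by
  induction hh with
  | phi k => exact hφ k
  | psi k => exact hψ k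
  | add _ _ ih1 ih2 =>
    intro N
    obtain ⟨C1, h1⟩ := ih1 N
    obtain ⟨C2, h2⟩ := ih2 N
    refine ⟨C1 + C2, fun r hr => (abs_add_le _ _).trans ?_⟩
    linarith [h1 r hr, h2 r hr]
  | smul c _ ih =>
    intro N
    obtain ⟨C1, h1⟩ := ih N
    refine ⟨|c| * C1, fun r hr => ?_⟩
    rw [abs_mul, mul_assoc]
    exact mul_le_mul_of_nonneg_left (h1 r hr) (abs_nonneg c)
  | mulr _ ih =>
    intro N
    obtain ⟨C1, h1⟩ := ih N
    refine ⟨(2*M+1) * C1, fun r hr => ?_⟩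
    rw [abs_mul, mul_assoc, abs_of_pos (by linarith [hr.1] : 0 < r)]
    exact mul_le_mul hr.2.le (h1 r hr) (abs_nonneg _) (by linarith)
  | divr _ ih =>
    intro N
    obtain ⟨C1, h1⟩ := ih N
    refine ⟨(2*M)⁻¹ * C1, fun r hr => ?_⟩
    have hr0 : 0 < r := by linarith [hr.1]
    rw [abs_mul, mul_assoc, abs_of_pos (inv_pos.2 hr0)]
    exact mul_le_mul (inv_anti₀ (by linarith) hr.1.le) (h1 r hr) (abs_nonneg _) (by positivity)
  | divf _ ih =>
    intro N
    obtain ⟨C1, h1⟩ := ih (N+1)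
    refine ⟨C1, fun r hr => ?_⟩
    have hr0 : 0 < r - 2*M := by linarith [hr.1]
    rw [abs_mul, abs_of_pos (inv_pos.2 hr0), inv_mul_le_iff₀ hr0]
    refine (h1 r hr).trans_eq (by ring)

/-- Equality on `r > 2M` with a member of `FlatGen`. -/
def IsFlat (M : ℝ) (φ ψ h : ℝ → ℝ) : Prop := ∃ h0, FlatGen M φ ψ h0 ∧ ∀ r, 2*M < r → h r = h0 r

section
variable {M : ℝ} {φ ψ h g : ℝ → ℝ}

lemma IsFlat.congr (hh : IsFlat M φ ψ h) (e : ∀ r, 2*M < r → g r = h r) : IsFlat M φ ψ g := by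
  obtain ⟨h0, h1, h2⟩ := hh
  exact ⟨h0, h1, fun r hr => (e r hr).trans (h2 r hr)⟩

lemma IsFlat.add (hh : IsFlat M φ ψ h) (hg : IsFlat M φ ψ g) :
    IsFlat M φ ψ (fun r => h r + g r) := by
  obtain ⟨h0, h1, h2⟩ := hh
  obtain ⟨g0, g1, g2⟩ := hg
  exact ⟨_, h1.add g1, fun r hr => by simp only [h2 r hr, g2 r hr]⟩

lemma IsFlat.smul (c : ℝ) (hh : IsFlat M φ ψ h) : IsFlat M φ ψ (fun r => c * h r) := by
  obtain ⟨h0, h1, h2⟩ := hh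
  exact ⟨_, h1.smul c, fun r hr => by simp only [h2 r hr]⟩

lemma IsFlat.mulr (hh : IsFlat M φ ψ h) : IsFlat M φ ψ (fun r => r * h r) := by
  obtain ⟨h0, h1, h2⟩ := hh
  exact ⟨_, h1.mulr, fun r hr => by simp only [h2 r hr]⟩

lemma IsFlat.divr (hh : IsFlat M φ ψ h) : IsFlat M φ ψ (fun r => r⁻¹ * h r) := by
  obtain ⟨h0, h1, h2⟩ := hh
  exact ⟨_, h1.divr, fun r hr => by simp only [h2 r hr]⟩

lemma IsFlat.divf (hh : IsFlat M φ ψ h) : IsFlat M φ ψ (fun r => (r-2*M)⁻¹ * h r) := by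
  obtain ⟨h0, h1, h2⟩ := hh
  exact ⟨_, h1.divf, fun r hr => by simp only [h2 r hr]⟩

lemma IsFlat.of_hasDerivAt (hM : 0 < M)
    (hφ : ContDiffOn ℝ ∞ φ (Ioi (2*M))) (hψ : ContDiffOn ℝ ∞ ψ (Ioi (2*M)))
    (hh : IsFlat M φ ψ h) (hd : ∀ r, 2*M < r → HasDerivAt h (g r) r) : IsFlat M φ ψ g := by
  obtain ⟨h0, h1, h2⟩ := hh
  obtain ⟨h', h3, h4⟩ := h1.exists_deriv hM hφ hψ
  refine ⟨h', h3, fun r hr => (hd r hr).unique ((h4 r hr).congr_of_eventuallyEq ?_)⟩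
  filter_upwards [Ioi_mem_nhds hr] with s hs using h2 s hs

/-- The infinite-order vanishing at `2M`, extended to the whole interval `(2M, R]` by
compactness. -/
lemma IsFlat.bound (hM : 0 < M)
    (hφ : ContDiffOn ℝ ∞ φ (Ioi (2*M))) (hψ : ContDiffOn ℝ ∞ ψ (Ioi (2*M)))
    (hφ' : ∀ k N : ℕ, ∃ C : ℝ, ∀ r ∈ Ioo (2*M) (2*M+1), |iteratedDeriv k φ r| ≤ C * (r - 2*M)^N)
    (hψ' : ∀ k N : ℕ, ∃ C : ℝ, ∀ r ∈ Ioo (2*M) (2*M+1), |iteratedDeriv k ψ r| ≤ C * (r - 2*M)^N)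
    (hh : IsFlat M φ ψ h) (N : ℕ) (R : ℝ) :
    ∃ C : ℝ, 0 ≤ C ∧ ∀ r, 2*M < r → r ≤ R → |h r| ≤ C * (r - 2*M)^N := by
  obtain ⟨h0, h1, h2⟩ := hh
  obtain ⟨h', -, h4⟩ := h1.exists_deriv hM hφ hψ
  obtain ⟨C1, hC1⟩ := h1.bound hM hφ' hψ' N
  have hc : ContinuousOn (fun r => h0 r / (r-2*M)^N) (Icc (2*M+1/2) R) := by
    refine ContinuousOn.div (fun r hr => (h4 r ?_).continuousAt.continuousWithinAt)
      (by fun_prop) (fun r hr => pow_ne_zero _ ?_) <;> linarith [hr.1]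
  obtain ⟨C2, hC2⟩ := isCompact_Icc.exists_bound_of_continuousOn hc
  refine ⟨max 0 (max C1 C2), le_max_left _ _, fun r hr hrR => ?_⟩
  have hp : 0 < (r-2*M)^N := pow_pos (by linarith) N
  rw [h2 r hr]
  rcases lt_or_ge r (2*M+1) with hlt | hge
  · exact (hC1 r ⟨hr, hlt⟩).trans (mul_le_mul_of_nonneg_right
      ((le_max_left _ _).trans (le_max_right _ _)) hp.le)
  · have := hC2 r ⟨by linarith, hrR⟩
    rw [Real.norm_eq_abs, abs_div, abs_of_pos hp, div_le_iff₀ hp] at this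
    exact this.trans (mul_le_mul_of_nonneg_right
      ((le_max_right _ _).trans (le_max_right _ _)) hp.le)

end

/-- All derivatives `∂_r^k ∂_v^j w`, restricted to the initial slice `v = r_*(r)`, are flat: the
`∂_v`-derivatives because the equation expresses `∂_v²` through derivatives along the slice, the
`∂_r`-derivatives because `∂_r` differs from the derivative along the slice by
`(r/(r-2M)) ∂_v`. -/
lemma flat_derXT {M lam : ℝ} (hM : 0 < M) {w : ℝ × ℝ → ℝ} {φ ψ : ℝ → ℝ}
    (hφ : ContDiffOn ℝ ∞ φ (Ioi (2*M))) (hψ : ContDiffOn ℝ ∞ ψ (Ioi (2*M)))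
    (hw : ContDiffOn ℝ ∞ w (extSet M))
    (hwave : ∀ p ∈ extSet M, (p.2^2 - 2*M*p.2) * opX (opX w) p + 2*p.2^2 * opX (opT w) p
      + 2*p.2*opT w p + 2*(p.2-M) * opX w p - lam^2 * w p = 0)
    (h0 : ∀ r, 2*M < r → w (rstar M r, r) = φ r)
    (h1 : ∀ r, 2*M < r → opT w (rstar M r, r) = ψ r) (k j : ℕ) :
    IsFlat M φ ψ (fun r => derXT w k j (rstar M r, r)) := by
  have hcurve : ∀ k j r, 2*M < r → HasDerivAt (fun s => derXT w k j (rstar M s, s))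
      (r/(r-2*M) * derXT w k (j+1) (rstar M r, r) + derXT w (k+1) j (rstar M r, r)) r := by
    intro k j r hr
    have := hasDerivAt_curve (smooth_derXT hw k j) 0 1 hr
    simp only [zero_add, one_mul] at this
    rwa [opT_derXT hw k j (show (rstar M r, r) ∈ extSet M from hr)] at this
  have hX : ∀ k j, IsFlat M φ ψ (fun r => derXT w k j (rstar M r, r)) →
      IsFlat M φ ψ (fun r => derXT w k (j+1) (rstar M r, r)) →
      IsFlat M φ ψ (fun r => derXT w (k+1) j (rstar M r, r)) := by
    intro k j a b
    have a' := a.of_hasDerivAt hM hφ hψ (hcurve k j)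
    refine (a'.add (b.divf.mulr.smul (-1))).congr fun r hr => ?_
    ring
  have hT : ∀ j, IsFlat M φ ψ (fun r => derXT w 0 j (rstar M r, r)) →
      IsFlat M φ ψ (fun r => derXT w 0 (j+1) (rstar M r, r)) →
      IsFlat M φ ψ (fun r => derXT w 0 (j+2) (rstar M r, r)) := by
    intro j a b
    have c := hX 0 j a b
    have c' := c.of_hasDerivAt hM hφ hψ (hcurve 1 j)
    have b' := b.of_hasDerivAt hM hφ hψ (hcurve 0 (j+1))
    have d : IsFlat M φ ψ (fun r => derXT w 1 (j+1) (rstar M r, r)) := by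
      refine (((((c'.mulr.mulr.add (c'.mulr.smul (-(2*M)))).add
        ((c.mulr.smul 2).add (c.smul (-(2*M))))).add (b.mulr.smul 2)).add
        (a.smul (-lam^2))).divr.divr.smul (-1)).congr fun r hr => ?_
      have e := wave_derXT hw hwave 0 j (rstar M r) r hr
      simp only [Nat.cast_zero, zero_add, Nat.reduceAdd] at e ⊢
      have hr0 : r ≠ 0 := by linarith
      have hr1 : r - 2*M ≠ 0 := by linarith
      field_simp
      linear_combination (r-2*M)*e
    refine (((b'.add (d.smul (-1))).divr.mulr).add
      ((b'.add (d.smul (-1))).divr.smul (-(2*M)))).congr fun r hr => ?_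
    have hr0 : r ≠ 0 := by linarith
    have hr1 : r - 2*M ≠ 0 := by linarith
    simp only [zero_add]
    field_simp
    ring
  have hT0 : ∀ j, IsFlat M φ ψ (fun r => derXT w 0 j (rstar M r, r)) ∧
      IsFlat M φ ψ (fun r => derXT w 0 (j+1) (rstar M r, r)) := by
    intro j
    induction j with
    | zero =>
      refine ⟨⟨_, .phi 0, fun r hr => ?_⟩, ⟨_, .psi 0, fun r hr => ?_⟩⟩
      · simpa [derXT, derT] using h0 r hr
      · simpa [derXT, derT] using h1 r hr
    | succ j ih => exact ⟨ih.2, hT j ih.1 ih.2⟩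
  induction k generalizing j with
  | zero => exact (hT0 j).1
  | succ k ih => exact hX k j (ih j) (ih (j+1))

/-! ### Bounds in the domain of outer communication -/

/-- `h` is bounded on each region `{t ≥ 0, v ≤ v₁}` of the exterior, i.e. on
`{r_*(r) ≤ v ≤ v₁}`. These regions contain a one-sided neighbourhood of each compact piece of the
future event horizon. -/
def HorizonBdd (M : ℝ) (h : ℝ × ℝ → ℝ) : Prop :=
  ∀ v₁, ∃ C, 0 ≤ C ∧ ∀ v r, 2*M < r → rstar M r ≤ v → v ≤ v₁ → |h (v, r)| ≤ C

lemma sub_le_exp {M v r : ℝ} (hM : 0 < M) (hr : 2*M < r) (h : rstar M r = v) :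
    r - 2*M ≤ Real.exp (v/(2*M)) := by
  have h0 : 0 < r - 2*M := by linarith
  have : v/(2*M) = r/(2*M) + Real.log (r - 2*M) := by
    rw [← h]; unfold rstar; field_simp
  rw [this, Real.exp_add, Real.exp_log h0]
  have hr0 : 0 < r := by linarith
  have : 1 ≤ Real.exp (r/(2*M)) := Real.one_le_exp (by positivity)
  nlinarith

/-- The bootstrap step of the basic estimate. If `|Ψ| ≤ N e^{γ e^{v/2M}}` in the truncated
characteristic triangle `{v - 2r_* ≤ c}`, then integrating `∂_r p = qΨ` along ingoing rays and
`LΨ = p` along outgoing rays from `t = 0` improves the constant to `C₀ + N/2`, thanks to the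
choice `γ = 2KM`. Here `L = ∂_t + ∂_{r_*}` is `(r-2M)/r` times the derivative in `r` along the
curves `v - 2r_* = const`, and `C₀ = D + D M e^{v₁/2M}`. -/
lemma bootstrap_step {M K D v₁ R c N : ℝ} (hM : 0 < M) (hK : 0 < K) (hD : 0 ≤ D)
    (hN : 0 ≤ N) (hR : 2*M < R) (hRv : rstar M R = v₁) {Ψ p : ℝ × ℝ → ℝ} {q : ℝ → ℝ}
    (hq : ∀ r, 2*M < r → |q r| ≤ K)
    (hp : ∀ v r, 2*M < r → HasDerivAt (fun s => p (v, s)) (q r * Ψ (v, r)) r)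
    (hΨ : ∀ c r, 2*M < r → HasDerivAt (fun s => Ψ (c + 2 * rstar M s, s))
      (r/(r-2*M) * p (c + 2 * rstar M r, r)) r)
    (hd0 : ∀ r, 2*M < r → r ≤ R → |Ψ (rstar M r, r)| ≤ D)
    (hd1 : ∀ r, 2*M < r → r ≤ R → |p (rstar M r, r)| ≤ D * (r-2*M))
    (hyp : ∀ v r, 2*M < r → rstar M r ≤ v → v ≤ v₁ → v - 2 * rstar M r ≤ c →
      |Ψ (v, r)| ≤ N * Real.exp (2*K*M*Real.exp (v/(2*M)))) :
    ∀ v r, 2*M < r → rstar M r ≤ v → v ≤ v₁ → v - 2 * rstar M r ≤ c →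
      |Ψ (v, r)| ≤ (D + D*M*Real.exp (v₁/(2*M)) + N/2)
        * Real.exp (2*K*M*Real.exp (v/(2*M))) := by
  -- Ingoing rays: `v` is fixed, and the ray meets `t = 0` at `r₀` with `r₀ - 2M ≤ e^{v/2M}`.
  have hpb : ∀ v r, 2*M < r → rstar M r ≤ v → v ≤ v₁ → v - 2 * rstar M r ≤ c →
      |p (v, r)| ≤ (D + K*N*Real.exp (2*K*M*Real.exp (v/(2*M)))) * Real.exp (v/(2*M)) := by
    intro v r hr h1 h2 h3
    obtain ⟨r0, hr0, hr0v⟩ := exists_rstar_eq hM v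
    have hle : r ≤ r0 := (rstar_le_iff hM hr hr0).1 (by rw [hr0v]; exact h1)
    have hleR : r0 ≤ R := (rstar_le_iff hM hr0 hR).1 (by rw [hr0v, hRv]; exact h2)
    have hm := norm_image_sub_le_of_norm_deriv_le_segment' (a := r) (b := r0)
      (f := fun s => p (v, s)) (f' := fun s => q s * Ψ (v, s))
      (C := K * (N * Real.exp (2*K*M*Real.exp (v/(2*M)))))
      (fun s hs => (hp v s (hr.trans_le hs.1)).hasDerivWithinAt) (fun s hs => by
        have hs0 := hr.trans_le hs.1
        rw [norm_mul]
        refine mul_le_mul (hq s hs0) (hyp v s hs0 ?_ h2 ?_) (norm_nonneg _) hK.le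
        · rw [← hr0v]; exact (rstar_le_iff hM hs0 hr0).2 hs.2.le
        · have := (rstar_le_iff hM hr hs0).2 hs.1
          linarith) r0 ⟨hle, le_rfl⟩
    simp only [Real.norm_eq_abs] at hm
    have hd := hd1 r0 hr0 hleR
    rw [hr0v] at hd
    have h4 := sub_le_exp hM hr0 hr0v
    have h5 : |p (v, r)| ≤ |p (v, r0)| + |p (v, r0) - p (v, r)| := by
      have := abs_sub_abs_le_abs_sub (p (v, r)) (p (v, r0))
      rw [abs_sub_comm] at this
      linarith
    have h6 : 0 ≤ K * (N * Real.exp (2*K*M*Real.exp (v/(2*M)))) := by positivity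
    have h7 : K * (N * Real.exp (2*K*M*Real.exp (v/(2*M)))) * (r0 - r)
        ≤ K * (N * Real.exp (2*K*M*Real.exp (v/(2*M)))) * Real.exp (v/(2*M)) :=
      mul_le_mul_of_nonneg_left (by linarith) h6
    have h8 := mul_le_mul_of_nonneg_left h4 hD
    linarith
  -- Outgoing rays: `v - 2r_*` is fixed, and the ray meets `t = 0` at `r₀` with `r_*(r₀) = -c'`.
  intro v r hr h1 h2 h3
  obtain ⟨c', hc'⟩ : ∃ c', c' = v - 2 * rstar M r := ⟨_, rfl⟩
  obtain ⟨r0, hr0, hr0v⟩ := exists_rstar_eq hM (-c')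
  have hv : v = c' + 2 * rstar M r := by linarith
  have hle : r0 ≤ r := (rstar_le_iff hM hr0 hr).1 (by rw [hr0v]; linarith)
  have hrR : r ≤ R := (rstar_le_iff hM hr hR).1 (by rw [hRv]; linarith)
  set β : ℝ → ℝ := fun s => Real.exp ((c' + 2 * rstar M s)/(2*M)) with hβ
  have hβd : ∀ s, 2*M < s → HasDerivAt β (β s * (s/(s-2*M)) / M) s := by
    intro s hs
    have := ((((hasDerivAt_rstar hs).const_mul 2).const_add c').div_const (2*M)).exp
    refine this.congr_deriv ?_
    rw [hβ]; field_simp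
  have hBd : ∀ s, 2*M < s → HasDerivAt
      (fun s => D + D*M*β s + N/2 * Real.exp (2*K*M*β s))
      ((s/(s-2*M)) * ((D + K*N*Real.exp (2*K*M*β s)) * β s)) s := by
    intro s hs
    have := (((hβd s hs).const_mul (D*M)).const_add D).add
      ((((hβd s hs).const_mul (2*K*M)).exp).const_mul (N/2))
    refine this.congr_deriv ?_
    have : s - 2*M ≠ 0 := by linarith
    field_simp
  have hfin := image_norm_le_of_norm_deriv_right_le_deriv_boundary' (a := r0) (b := r)
    (f := fun s => Ψ (c' + 2 * rstar M s, s))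
    (f' := fun s => s/(s-2*M) * p (c' + 2 * rstar M s, s))
    (fun s hs => (hΨ c' s (hr0.trans_le hs.1)).continuousAt.continuousWithinAt)
    (fun s hs => (hΨ c' s (hr0.trans_le hs.1)).hasDerivWithinAt)
    (B := fun s => D + D*M*β s + N/2 * Real.exp (2*K*M*β s))
    (B' := fun s => (s/(s-2*M)) * ((D + K*N*Real.exp (2*K*M*β s)) * β s))
    (by
      have e : c' + 2 * rstar M r0 = rstar M r0 := by rw [hr0v]; ring
      simp only [e]
      refine (hd0 r0 hr0 (hle.trans hrR)).trans ?_
      have : 0 ≤ D*M*β r0 + N/2 * Real.exp (2*K*M*β r0) := by positivity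
      linarith)
    (fun s hs => (hBd s (hr0.trans_le hs.1)).continuousAt.continuousWithinAt)
    (fun s hs => (hBd s (hr0.trans_le hs.1)).hasDerivWithinAt)
    (fun s hs => by
      have hs0 := hr0.trans_le hs.1
      have hs1 : 0 < s - 2*M := by linarith
      have hs2 : 0 < s := by linarith
      have h4 := (rstar_le_iff hM hr0 hs0).2 hs.1
      have h5 := (rstar_le_iff hM hs0 hr).2 hs.2.le
      rw [norm_mul, Real.norm_eq_abs, abs_of_pos (by positivity : 0 < s/(s-2*M))]
      refine mul_le_mul_of_nonneg_left (hpb _ s hs0 ?_ ?_ ?_) (by positivity) <;> linarith)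
    (x := r) ⟨hle, le_rfl⟩
  simp only [hβ, ← hv, Real.norm_eq_abs] at hfin
  have hw1 : 1 ≤ Real.exp (2*K*M*Real.exp (v/(2*M))) := Real.one_le_exp (by positivity)
  have hvv : Real.exp (v/(2*M)) ≤ Real.exp (v₁/(2*M)) := by gcongr
  have h9 : D*M*Real.exp (v/(2*M)) ≤ D*M*Real.exp (v₁/(2*M)) := by gcongr
  have h10 : 0 ≤ D + D*M*Real.exp (v₁/(2*M)) := by positivity
  nlinarith [mul_le_mul_of_nonneg_left hw1 h10]

/-- The basic estimate: a solution of the characteristic system `∂_r p = qΨ`, `LΨ = p` with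
`Ψ = O(1)` and `p = O(r-2M)` on `t = 0` is bounded up to the horizon. -/
lemma base_bound {M K D v₁ R : ℝ} (hM : 0 < M) (hK : 0 < K) (hD : 0 ≤ D)
    (hR : 2*M < R) (hRv : rstar M R = v₁) {Ψ p : ℝ × ℝ → ℝ} {q : ℝ → ℝ}
    (hq : ∀ r, 2*M < r → |q r| ≤ K) (hΨc : ContinuousOn Ψ (extSet M))
    (hp : ∀ v r, 2*M < r → HasDerivAt (fun s => p (v, s)) (q r * Ψ (v, r)) r)
    (hΨ : ∀ c r, 2*M < r → HasDerivAt (fun s => Ψ (c + 2 * rstar M s, s))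
      (r/(r-2*M) * p (c + 2 * rstar M r, r)) r)
    (hd0 : ∀ r, 2*M < r → r ≤ R → |Ψ (rstar M r, r)| ≤ D)
    (hd1 : ∀ r, 2*M < r → r ≤ R → |p (rstar M r, r)| ≤ D * (r-2*M)) :
    ∃ C, 0 ≤ C ∧ ∀ v r, 2*M < r → rstar M r ≤ v → v ≤ v₁ → |Ψ (v, r)| ≤ C := by
  set C₀ := D + D*M*Real.exp (v₁/(2*M)) with hC₀
  have hC₀' : 0 ≤ C₀ := by positivity
  refine ⟨2*C₀ * Real.exp (2*K*M*Real.exp (v₁/(2*M))), by positivity, fun v r hr h1 h2 => ?_⟩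
  obtain ⟨c, hc⟩ : ∃ c, c = v - 2 * rstar M r := ⟨_, rfl⟩
  set wt : ℝ → ℝ := fun v => Real.exp (2*K*M*Real.exp (v/(2*M))) with hwt
  have hw1 : ∀ v, 1 ≤ wt v := fun v => Real.one_le_exp (by positivity)
  -- `N` is the best constant in the weighted bound on the triangle with vertex `(v, r)`; it is
  -- finite because the triangle lies in a compact box inside the exterior.
  set S : Set ℝ := {x | ∃ v r, 2*M < r ∧ rstar M r ≤ v ∧ v ≤ v₁ ∧ v - 2 * rstar M r ≤ c ∧
    x = |Ψ (v, r)| / wt v} with hS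
  have hmem : |Ψ (v, r)| / wt v ∈ S := ⟨v, r, hr, h1, h2, hc.ge, rfl⟩
  have hbdd : BddAbove S := by
    obtain ⟨ra, hra, hrac⟩ := exists_rstar_eq hM (-c)
    have hsub : Icc (-c) v₁ ×ˢ Icc ra R ⊆ extSet M := fun x hx => hra.trans_le hx.2.1
    obtain ⟨B, hB⟩ := (isCompact_Icc.prod isCompact_Icc).exists_bound_of_continuousOn
      (hΨc.mono hsub)
    refine ⟨B, ?_⟩
    rintro x ⟨v', r', hr', h1', h2', h3', rfl⟩
    refine (div_le_self (abs_nonneg _) (hw1 v')).trans (hB (v', r') ⟨⟨?_, h2'⟩, ?_, ?_⟩)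
    · linarith
    · exact (rstar_le_iff hM hra hr').1 (by rw [hrac]; linarith)
    · exact (rstar_le_iff hM hr' hR).1 (by rw [hRv]; linarith)
  have hN0 : 0 ≤ sSup S :=
    (div_nonneg (abs_nonneg _) (zero_le_one.trans (hw1 v))).trans (le_csSup hbdd hmem)
  have hstep := bootstrap_step hM hK hD hN0 hR hRv hq hp hΨ hd0 hd1 (c := c)
    (fun v' r' hr' h1' h2' h3' => by
      have := le_csSup hbdd ⟨v', r', hr', h1', h2', h3', rfl⟩
      rwa [div_le_iff₀ (zero_lt_one.trans_le (hw1 v'))] at this)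
  have hle : sSup S ≤ C₀ + sSup S / 2 := by
    refine csSup_le ⟨_, hmem⟩ ?_
    rintro x ⟨v', r', hr', h1', h2', h3', rfl⟩
    rw [div_le_iff₀ (zero_lt_one.trans_le (hw1 v'))]
    exact hstep v' r' hr' h1' h2' h3'
  have h4 := le_csSup hbdd hmem
  rw [div_le_iff₀ (zero_lt_one.trans_le (hw1 v))] at h4
  have h5 : wt v ≤ wt v₁ := by
    simp only [hwt]
    gcongr
  exact h4.trans (mul_le_mul (by linarith) h5 (zero_le_one.trans (hw1 v)) (by positivity))

/-- The red-shift transport estimate. Along outgoing rays `y` satisfies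
`r² L y = -κ (r-M) y - g` with `κ ≥ 2`; the damping coefficient `κ (r-M) ≥ 2M` keeps `y` bounded
above, up to the horizon, in terms of the data and `sup |g|`. -/
lemma transport_le {M κ G Y R v₁ : ℝ} (hM : 0 < M) (hκ : 2 ≤ κ) (hY : 0 ≤ Y) (hG : 0 ≤ G)
    (hR : 2*M < R) (hRv : rstar M R = v₁) {y g : ℝ × ℝ → ℝ}
    (hy : ∀ c r, 2*M < r → HasDerivAt (fun s => y (c + 2 * rstar M s, s))
      ((-(κ*(r-M)) * y (c + 2 * rstar M r, r) - g (c + 2 * rstar M r, r))/(r*(r-2*M))) r)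
    (hg : ∀ v r, 2*M < r → rstar M r ≤ v → v ≤ v₁ → |g (v, r)| ≤ G)
    (hd : ∀ r, 2*M < r → r ≤ R → |y (rstar M r, r)| ≤ Y) :
    ∀ v r, 2*M < r → rstar M r ≤ v → v ≤ v₁ → y (v, r) ≤ Y + G/M + 1 := by
  intro v r hr h1 h2
  obtain ⟨c, hc⟩ : ∃ c, c = v - 2 * rstar M r := ⟨_, rfl⟩
  obtain ⟨r0, hr0, hr0v⟩ := exists_rstar_eq hM (-c)
  have hv : v = c + 2 * rstar M r := by linarith
  have hle : r0 ≤ r := (rstar_le_iff hM hr0 hr).1 (by rw [hr0v]; linarith)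
  have hrR : r ≤ R := (rstar_le_iff hM hr hR).1 (by rw [hRv]; linarith)
  have hfin := image_le_of_deriv_right_lt_deriv_boundary' (a := r0) (b := r)
    (f := fun s => y (c + 2 * rstar M s, s))
    (fun s hs => (hy c s (hr0.trans_le hs.1)).continuousAt.continuousWithinAt)
    (fun s hs => (hy c s (hr0.trans_le hs.1)).hasDerivWithinAt)
    (B := fun _ => Y + G/M + 1) (B' := fun _ => 0)
    (by
      have e : c + 2 * rstar M r0 = rstar M r0 := by rw [hr0v]; ring
      simp only [e]
      have := (abs_le.1 (hd r0 hr0 (hle.trans hrR))).2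
      have : 0 ≤ G/M := by positivity
      linarith)
    continuousOn_const (fun s _ => hasDerivWithinAt_const _ _ _)
    (fun s hs he => by
      have hs0 := hr0.trans_le hs.1
      have h4 := (rstar_le_iff hM hr0 hs0).2 hs.1
      have h5 := (rstar_le_iff hM hs0 hr).2 hs.2.le
      have hg' := (abs_le.1 (hg (c + 2 * rstar M s) s hs0 (by linarith) (by linarith))).1
      have he' : y (c + 2 * rstar M s, s) = Y + G/M + 1 := he
      rw [he']
      refine div_neg_of_neg_of_pos ?_ (mul_pos (by linarith) (by linarith))
      have h6 : M * (G/M) = G := by field_simp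
      have h7 : 2 * M ≤ κ * (s - M) := by nlinarith
      have h8 : 0 ≤ G/M := by positivity
      have h9 : 2 * M * (Y + G/M + 1) ≤ κ * (s - M) * (Y + G/M + 1) :=
        mul_le_mul_of_nonneg_right h7 (by positivity)
      nlinarith)
    (x := r) ⟨hle, le_rfl⟩
  simpa only [← hv] using hfin

lemma HorizonBdd.add {M : ℝ} {f g : ℝ × ℝ → ℝ} (hf : HorizonBdd M f) (hg : HorizonBdd M g) :
    HorizonBdd M (fun p => f p + g p) := fun v₁ => by
  obtain ⟨C, hC, h1⟩ := hf v₁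
  obtain ⟨C', hC', h1'⟩ := hg v₁
  refine ⟨C + C', by positivity, fun v r a b c => (abs_add_le _ _).trans ?_⟩
  exact add_le_add (h1 v r a b c) (h1' v r a b c)

lemma HorizonBdd.smul {M : ℝ} {f : ℝ × ℝ → ℝ} (hf : HorizonBdd M f) (a : ℝ) :
    HorizonBdd M (fun p => a * f p) := fun v₁ => by
  obtain ⟨C, hC, h1⟩ := hf v₁
  refine ⟨|a| * C, by positivity, fun v r h h' h'' => ?_⟩
  rw [abs_mul]
  exact mul_le_mul_of_nonneg_left (h1 v r h h' h'') (abs_nonneg a)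

lemma HorizonBdd.mulr {M : ℝ} (hM : 0 < M) {f : ℝ × ℝ → ℝ} (hf : HorizonBdd M f) :
    HorizonBdd M (fun p => p.2 * f p) := fun v₁ => by
  obtain ⟨C, hC, h1⟩ := hf v₁
  obtain ⟨R, hR, hRv⟩ := exists_rstar_eq hM v₁
  have hR0 : 0 < R := by linarith
  refine ⟨R * C, by positivity, fun v r h h' h'' => ?_⟩
  have hr0 : 0 < r := by linarith
  rw [abs_mul, abs_of_pos hr0]
  exact mul_le_mul ((rstar_le_iff hM h hR).1 (by rw [hRv]; linarith)) (h1 v r h h' h'')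
    (abs_nonneg _) hR0.le

/-- All derivatives `∂_r^k ∂_v^j w` are bounded up to the horizon. The case `k = 0` is the basic
estimate for the characteristic system satisfied by `Ψ = r ∂_v^j w`; each further `∂_r` is gained
by the red-shift transport estimate. -/
lemma horizonBdd_derXT {M lam : ℝ} (hM : 0 < M) {w : ℝ × ℝ → ℝ} {φ ψ : ℝ → ℝ}
    (hφ : ContDiffOn ℝ ∞ φ (Ioi (2*M))) (hψ : ContDiffOn ℝ ∞ ψ (Ioi (2*M)))
    (hφ' : ∀ k N : ℕ, ∃ C : ℝ, ∀ r ∈ Ioo (2*M) (2*M+1), |iteratedDeriv k φ r| ≤ C * (r - 2*M)^N)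
    (hψ' : ∀ k N : ℕ, ∃ C : ℝ, ∀ r ∈ Ioo (2*M) (2*M+1), |iteratedDeriv k ψ r| ≤ C * (r - 2*M)^N)
    (hw : ContDiffOn ℝ ∞ w (extSet M))
    (hwave : ∀ p ∈ extSet M, (p.2^2 - 2*M*p.2) * opX (opX w) p + 2*p.2^2 * opX (opT w) p
      + 2*p.2*opT w p + 2*(p.2-M) * opX w p - lam^2 * w p = 0)
    (h0 : ∀ r, 2*M < r → w (rstar M r, r) = φ r)
    (h1 : ∀ r, 2*M < r → opT w (rstar M r, r) = ψ r) (k j : ℕ) :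
    HorizonBdd M (derXT w k j) := by
  have hflat := flat_derXT hM hφ hψ hw hwave h0 h1
  have hcurve : ∀ k j c r, 2*M < r → HasDerivAt (fun s => derXT w k j (c + 2 * rstar M s, s))
      (2*(r/(r-2*M)) * derXT w k (j+1) (c + 2 * rstar M r, r)
        + derXT w (k+1) j (c + 2 * rstar M r, r)) r := by
    intro k j c r hr
    have := hasDerivAt_curve (smooth_derXT hw k j) c 2 hr
    rwa [opT_derXT hw k j (show (c + 2 * rstar M r, r) ∈ extSet M from hr)] at this
  induction k using Nat.strong_induction_on generalizing j with
  | _ k ih =>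
  rcases k with _ | k
  · intro v₁
    obtain ⟨R, hR, hRv⟩ := exists_rstar_eq hM v₁
    set Ψ : ℝ × ℝ → ℝ := fun p => p.2 * derXT w 0 j p with hΨdef
    set P : ℝ × ℝ → ℝ := fun p => 2*p.2*derXT w 0 (j+1) p + (1 - 2*M*p.2⁻¹) * derXT w 0 j p
      + (p.2 - 2*M) * derXT w 1 j p with hPdef
    have hfl0 : IsFlat M φ ψ (fun r => Ψ (rstar M r, r)) := (hflat 0 j).mulr
    have hfl1 : IsFlat M φ ψ (fun r => P (rstar M r, r)) := by
      refine ((((hflat 0 (j+1)).mulr.smul 2).add ((hflat 0 j).add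
        ((hflat 0 j).divr.smul (-(2*M))))).add ((hflat 1 j).mulr.add
        ((hflat 1 j).smul (-(2*M))))).congr fun r hr => ?_
      simp only [hPdef]
      ring
    obtain ⟨D0, hD0, hd0⟩ := hfl0.bound hM hφ hψ hφ' hψ' 0 R
    obtain ⟨D1, hD1, hd1⟩ := hfl1.bound hM hφ hψ hφ' hψ' 1 R
    obtain ⟨C, hC, hCb⟩ := base_bound (K := lam^2/(2*M)^2 + 2*M/(2*M)^3) (D := D0 + D1)
      (q := fun r => lam^2/r^2 + 2*M/r^3) (Ψ := Ψ) (p := P) hM (by positivity) (by positivity)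
      hR hRv (fun r hr => by
        have hr0 : 0 < r := by linarith
        rw [abs_of_nonneg (by positivity)]
        gcongr)
      (continuousOn_snd.mul (smooth_derXT hw 0 j).continuousOn)
      (fun v r hr => by
        have hr0 : r ≠ 0 := by linarith
        have hd : ∀ k j, HasDerivAt (fun s => derXT w k j (v, s)) (derXT w (k+1) j (v, r)) r :=
          fun k j => hasDerivAt_r (smooth_derXT hw k j) hr
        have := (((((hasDerivAt_id r).const_mul 2).mul (hd 0 (j+1))).add
          ((((hasDerivAt_inv hr0).const_mul (2*M)).const_sub 1).mul (hd 0 j))).add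
          (((hasDerivAt_id r).sub_const (2*M)).mul (hd 1 j)))
        refine this.congr_deriv ?_
        have e := wave_derXT hw hwave 0 j v r hr
        simp only [Nat.cast_zero, zero_add, Nat.reduceAdd, id] at e ⊢
        simp only [hΨdef]
        field_simp
        linear_combination r * e)
      (fun c r hr => by
        have hr0 : r ≠ 0 := by linarith
        have hr1 : r - 2*M ≠ 0 := by linarith
        refine ((hasDerivAt_id r).mul (hcurve 0 j c r hr)).congr_deriv ?_
        simp only [hPdef, id, zero_add]
        field_simp
        ring)
      (fun r hr hrR => by
        have := hd0 r hr hrR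
        rw [pow_zero] at this
        linarith)
      (fun r hr hrR => by
        have := hd1 r hr hrR
        rw [pow_one] at this
        nlinarith)
    refine ⟨C/(2*M), by positivity, fun v r hr a b => ?_⟩
    have := hCb v r hr a b
    have hr0 : 0 < r := by linarith
    simp only [hΨdef, abs_mul, abs_of_pos hr0] at this
    rw [le_div_iff₀ (by positivity)]
    nlinarith [abs_nonneg (derXT w 0 j (v, r))]
  · set g : ℝ × ℝ → ℝ := fun p => (4*(k:ℝ)+2)*(p.2*derXT w k (j+1) p)
      + 2*(k:ℝ)^2 * derXT w (k-1) (j+1) p + ((k:ℝ)*(k+1) - lam^2) * derXT w k j p with hg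
    have hgb : HorizonBdd M g :=
      ((((ih k (by omega) (j+1)).mulr hM).smul _).add ((ih (k-1) (by omega) (j+1)).smul _)).add
        ((ih k (by omega) j).smul _)
    intro v₁
    obtain ⟨R, hR, hRv⟩ := exists_rstar_eq hM v₁
    obtain ⟨G, hG, hGb⟩ := hgb v₁
    obtain ⟨Y, hY, hYb⟩ := (hflat (k+1) j).bound hM hφ hψ hφ' hψ' 0 R
    simp only [pow_zero, mul_one] at hYb
    have hy : ∀ c r, 2*M < r → HasDerivAt (fun s => derXT w (k+1) j (c + 2 * rstar M s, s))
        ((-((2*((k:ℝ)+1))*(r-M)) * derXT w (k+1) j (c + 2 * rstar M r, r)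
          - g (c + 2 * rstar M r, r))/(r*(r-2*M))) r := by
      intro c r hr
      refine (hcurve (k+1) j c r hr).congr_deriv ?_
      have e := wave_derXT hw hwave k j (c + 2 * rstar M r) r hr
      have hr0 : r ≠ 0 := by linarith
      have hr1 : r - 2*M ≠ 0 := by linarith
      simp only [hg]
      rw [eq_div_iff (mul_ne_zero hr0 hr1)]
      have e2 : 2*(r/(r-2*M)) * (r*(r-2*M)) = 2*r^2 := by field_simp
      linear_combination e + derXT w (k+1) (j+1) (c + 2 * rstar M r, r) * e2
    have hκ : (2:ℝ) ≤ 2*((k:ℝ)+1) := by linarith [(Nat.cast_nonneg k : (0:ℝ) ≤ k)]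
    have hup := transport_le hM hκ hY hG hR hRv hy hGb hYb
    have hlo := transport_le hM hκ hY hG hR hRv (y := fun p => - derXT w (k+1) j p)
      (g := fun p => - g p) (fun c r hr => (hy c r hr).neg.congr_deriv (by ring))
      (fun v r a b c => by rw [abs_neg]; exact hGb v r a b c)
      (fun r a b => by rw [abs_neg]; exact hYb r a b)
    refine ⟨Y + G/M + 1, by positivity, fun v r a b c => abs_le.2 ⟨?_, hup v r a b c⟩⟩
    linarith [hlo v r a b c]

/-! ### Smooth extension to the horizon -/

/-- The exterior together with the horizon `r = 2M`. -/
def clSet (M : ℝ) : Set (ℝ × ℝ) := {p | 2*M ≤ p.2}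

lemma convex_extSet (M : ℝ) : Convex ℝ (extSet M) :=
  (convex_Ioi (2*M)).linear_preimage (LinearMap.snd ℝ ℝ ℝ)

lemma clSet_eq_prod (M : ℝ) : clSet M = univ ×ˢ Ici (2*M) := by
  ext p; simp [clSet]

lemma closure_extSet (M : ℝ) : closure (extSet M) = clSet M := by
  have : extSet M = univ ×ˢ Ioi (2*M) := by ext p; simp [extSet]
  rw [this, closure_prod_eq, closure_univ, closure_Ioi, clSet_eq_prod]

lemma uniqueDiffOn_clSet (M : ℝ) : UniqueDiffOn ℝ (clSet M) := by
  rw [clSet_eq_prod]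
  exact uniqueDiffOn_univ.prod (uniqueDiffOn_Ici _)

/-- A function that is continuous in the exterior and bounded to the future of `t = 0`, locally
uniformly in `v`, is locally bounded up to the horizon: since `r_* → -∞` there, a neighbourhood of
a horizon point lies to the future of `t = 0`. -/
lemma HorizonBdd.locally {M : ℝ} (hM : 0 < M) {f : ℝ × ℝ → ℝ} (hf : HorizonBdd M f)
    (hc : ContinuousOn f (extSet M)) {x : ℝ × ℝ} (hx : x ∈ clSet M) :
    ∃ C, ∀ᶠ y in nhdsWithin x (extSet M), |f y| ≤ C := by
  rcases eq_or_lt_of_le (show 2*M ≤ x.2 from hx) with h | h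
  · obtain ⟨C, -, hC⟩ := hf (x.1 + 1)
    obtain ⟨ra, hra, hra'⟩ := exists_rstar_eq hM (x.1 - 1)
    refine ⟨C, ?_⟩
    have e1 : ∀ᶠ y : ℝ × ℝ in nhds x, y.1 < x.1 + 1 :=
      continuous_fst.continuousAt.eventually_lt continuousAt_const (by linarith)
    have e2 : ∀ᶠ y : ℝ × ℝ in nhds x, x.1 - 1 < y.1 :=
      continuousAt_const.eventually_lt continuous_fst.continuousAt (by linarith)
    have e3 : ∀ᶠ y : ℝ × ℝ in nhds x, y.2 < ra :=
      continuous_snd.continuousAt.eventually_lt continuousAt_const (by linarith)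
    filter_upwards [nhdsWithin_le_nhds e1, nhdsWithin_le_nhds e2, nhdsWithin_le_nhds e3,
      self_mem_nhdsWithin] with y h1 h2 h3 hy
    have hy' : 2*M < y.2 := hy
    have := (rstar_le_iff hM hy' hra).2 h3.le
    exact hC y.1 y.2 hy' (by linarith) h1.le
  · refine ⟨|f x| + 1, ?_⟩
    have hlt : ∀ᶠ y in nhdsWithin x (extSet M), |f y| < |f x| + 1 :=
      (hc x h).abs.eventually_lt tendsto_const_nhds (by linarith)
    filter_upwards [hlt] with y hy using hy.le

lemma fderiv_eq_opT_opX (g : ℝ × ℝ → ℝ) (p : ℝ × ℝ) :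
    fderiv ℝ g p = opT g p • ContinuousLinearMap.fst ℝ ℝ ℝ
      + opX g p • ContinuousLinearMap.snd ℝ ℝ ℝ := by
  refine ContinuousLinearMap.ext fun q => ?_
  obtain ⟨a, b⟩ := q
  rw [fderiv_apply_eq]
  simp [mul_comm]

/-- If the first derivatives of `f` are locally bounded near a point of the closed exterior, then
`f` is locally Lipschitz there and so has a limit at this point. -/
lemma exists_limit {M : ℝ} {f : ℝ × ℝ → ℝ} (hf : ContDiffOn ℝ ∞ f (extSet M)) {x : ℝ × ℝ}
    (hT : ∃ C, ∀ᶠ y in nhdsWithin x (extSet M), |opT f y| ≤ C)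
    (hX : ∃ C, ∀ᶠ y in nhdsWithin x (extSet M), |opX f y| ≤ C) :
    ∃ l, Tendsto f (nhdsWithin x (extSet M)) (nhds l) := by
  obtain ⟨C, hC⟩ := hT
  obtain ⟨D, hD⟩ := hX
  obtain ⟨δ, hδ, hb⟩ := Metric.mem_nhdsWithin_iff.1 (hC.and hD)
  have hlip : LipschitzOnWith
      (Real.toNNReal (C * ‖ContinuousLinearMap.fst ℝ ℝ ℝ‖ + D * ‖ContinuousLinearMap.snd ℝ ℝ ℝ‖))
      f (Metric.ball x δ ∩ extSet M) := by
    refine Convex.lipschitzOnWith_of_nnnorm_fderiv_le (𝕜 := ℝ)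
      (fun y hy => diffAt_of_smooth hf hy.2) (fun y hy => ?_)
      ((convex_ball x δ).inter (convex_extSet M))
    obtain ⟨h1, h2⟩ := hb hy
    refine NNReal.coe_le_coe.1 (le_trans ?_ (Real.le_coe_toNNReal _))
    rw [coe_nnnorm, fderiv_eq_opT_opX]
    refine (norm_add_le _ _).trans ?_
    rw [norm_smul, norm_smul, Real.norm_eq_abs, Real.norm_eq_abs]
    gcongr
  obtain ⟨g, hg, hfg⟩ := hlip.extend_real
  refine ⟨g x, ((hg.continuous.tendsto x).mono_left nhdsWithin_le_nhds).congr' ?_⟩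
  filter_upwards [nhdsWithin_le_nhds (Metric.ball_mem_nhds x hδ), self_mem_nhdsWithin]
    with y h1 h2 using (hfg ⟨h1, h2⟩).symm

/-- A smooth function on the exterior, all of whose derivatives are bounded near the horizon,
extends smoothly to the closed exterior. The extensions of the derivatives are, by the mean value
theorem, the derivatives of the extension. -/
lemma smooth_extendFrom {M : ℝ} (hM : 0 < M) {w : ℝ × ℝ → ℝ} (hw : ContDiffOn ℝ ∞ w (extSet M))
    (hb : ∀ k j, HorizonBdd M (derXT w k j)) :
    ContDiffOn ℝ ∞ (extendFrom (extSet M) w) (clSet M) := by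
  set E : ℕ → ℕ → ℝ × ℝ → ℝ := fun k j => extendFrom (extSet M) (derXT w k j) with hE
  have hsm := smooth_derXT hw
  have hloc : ∀ k j, ∀ x ∈ clSet M,
      ∃ C, ∀ᶠ y in nhdsWithin x (extSet M), |derXT w k j y| ≤ C :=
    fun k j x hx => (hb k j).locally hM (hsm k j).continuousOn hx
  have hlim : ∀ k j, ∀ x ∈ clSet M,
      ∃ l, Tendsto (derXT w k j) (nhdsWithin x (extSet M)) (nhds l) := by
    intro k j x hx
    refine exists_limit (hsm k j) ?_ (hloc (k+1) j x hx)
    obtain ⟨C, hC⟩ := hloc k (j+1) x hx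
    refine ⟨C, ?_⟩
    filter_upwards [hC, self_mem_nhdsWithin] with y h1 h2
    rwa [opT_derXT hw k j h2]
  have hext : ∀ k j, EqOn (E k j) (derXT w k j) (extSet M) :=
    fun k j => extendFrom_extends (hsm k j).continuousOn
  have hcont : ∀ k j, ContinuousOn (E k j) (clSet M) :=
    fun k j => continuousOn_extendFrom (closure_extSet M).ge (hlim k j)
  have hder : ∀ k j, ∀ x ∈ clSet M, HasFDerivWithinAt (E k j)
      (E k (j+1) x • ContinuousLinearMap.fst ℝ ℝ ℝ + E (k+1) j x • ContinuousLinearMap.snd ℝ ℝ ℝ)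
      (clSet M) x := by
    intro k j x hx
    rw [← closure_extSet]
    refine hasFDerivWithinAt_closure_of_tendsto_fderiv ?_ (convex_extSet M) (isOpen_extSet M) ?_ ?_
    · exact ((hsm k j).differentiableOn (by simp)).congr (hext k j)
    · intro y hy
      rw [closure_extSet] at hy
      exact (hcont k j y hy).mono (fun z (hz : 2*M < z.2) => hz.le)
    · have h1 := ((tendsto_extendFrom (hlim k (j+1) x hx)).smul_const
        (ContinuousLinearMap.fst ℝ ℝ ℝ)).add
        ((tendsto_extendFrom (hlim (k+1) j x hx)).smul_const (ContinuousLinearMap.snd ℝ ℝ ℝ))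
      refine Tendsto.congr' (f₂ := fun y => fderiv ℝ (E k j) y) ?_ h1
      filter_upwards [self_mem_nhdsWithin] with y hy
      rw [((hext k j).eventuallyEq_of_mem ((isOpen_extSet M).mem_nhds hy)).fderiv_eq,
        fderiv_eq_opT_opX, opT_derXT hw k j hy]
      rfl
  have hn : ∀ (n : ℕ) k j, ContDiffOn ℝ n (E k j) (clSet M) := by
    intro n
    induction n with
    | zero => exact fun k j => contDiffOn_zero.2 (hcont k j)
    | succ n ih =>
      intro k j
      rw [Nat.cast_add, Nat.cast_one,
        contDiffOn_succ_iff_hasFDerivWithinAt_of_uniqueDiffOn (uniqueDiffOn_clSet M)]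
      exact ⟨fun h => absurd h (by simp), _,
        ((ih k (j+1)).smul contDiffOn_const).add ((ih (k+1) j).smul contDiffOn_const),
        hder k j⟩
  exact contDiffOn_infty.2 fun n => hn n 0 0

/-- Smoothness up to the event horizon for data Schwartz at `r = 2M` (single mode):
if the compactly supported initial data vanish to infinite order at `r = 2M` together
with all derivatives, then the rescaled solution `Ũ` extends smoothly to `{a = 0}`. -/
theorem smooth_up_to_horizon_schwartz_data
    (M lam R₀ : ℝ) (hM : 0 < M) (hlam : 0 ≤ lam) (hR₀ : 2*M < R₀)
    (u : ℝ → ℝ → ℝ) (hu : IsModeSolution M lam u)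
    (hφ0 : ∀ r : ℝ, R₀ ≤ r → u 0 r = 0) (hψ0 : ∀ r : ℝ, R₀ ≤ r → pdt u 0 r = 0)
    (hφflat : ∀ k N : ℕ, ∃ C : ℝ, ∀ r ∈ Set.Ioo (2*M) (2*M+1),
      |iteratedDeriv k (fun s => u 0 s) r| ≤ C * (r - 2*M)^N)
    (hψflat : ∀ k N : ℕ, ∃ C : ℝ, ∀ r ∈ Set.Ioo (2*M) (2*M+1),
      |iteratedDeriv k (fun s => pdt u 0 s) r| ≤ C * (r - 2*M)^N) :
    ∃ W : ℝ → ℝ → ℝ,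
      ContDiffOn ℝ ∞ (Function.uncurry W) (Set.Ico 0 (Real.exp (-1)) ×ˢ Set.Ioi (0:ℝ)) ∧
      ∀ a ∈ Set.Ioo 0 (Real.exp (-1)), ∀ b : ℝ, 0 < b → W a b = Utilde M u a b := by
  set w := efw M u with hw_def
  have hw : ContDiffOn ℝ ∞ w (extSet M) := smooth_efw hu
  have hslice : ∀ g : ℝ × ℝ → ℝ, ContDiffOn ℝ ∞ g (extSet M) →
      ContDiffOn ℝ ∞ (fun r => g (0 + 1 * rstar M r, r)) (Ioi (2*M)) := by
    intro g hg
    refine hg.comp (t := extSet M) ?_ (fun r hr => hr)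
    unfold rstar
    refine ContDiffOn.prodMk (contDiffOn_const.add (contDiffOn_const.mul (contDiffOn_id.add
      (contDiffOn_const.mul (ContDiffOn.log (contDiffOn_id.sub contDiffOn_const) ?_)))))
      contDiffOn_id
    intro r hr
    have : 2*M < r := hr
    change r - 2*M ≠ 0
    linarith
  have hφ : ContDiffOn ℝ ∞ (fun s => u 0 s) (Ioi (2*M)) :=
    (hslice w hw).congr fun r _ => u_eq_efw M u 0 r
  have hψ : ContDiffOn ℝ ∞ (fun s => pdt u 0 s) (Ioi (2*M)) :=
    (hslice (opT w) (smooth_opT hw)).congr fun r hr => pdt_eq hu 0 hr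
  have hbdd : ∀ k j, HorizonBdd M (derXT w k j) :=
    horizonBdd_derXT hM hφ hψ hφflat hψflat hw (fun p hp => wave_efw hM hu hp)
      (fun r _ => by rw [u_eq_efw M u 0 r, zero_add, one_mul])
      (fun r hr => by rw [pdt_eq hu 0 hr, zero_add, one_mul])
  have hsmooth := smooth_extendFrom hM hw hbdd
  refine ⟨fun a b => 2 * Real.sqrt M * b *
    extendFrom (extSet M) w (4*M*Real.log b, 2*M + a*b^2), ?_, ?_⟩
  · have h2 : ContDiffOn ℝ ∞ (fun p : ℝ × ℝ => (4*M*Real.log p.2, 2*M + p.1*p.2^2))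
        (Ico 0 (Real.exp (-1)) ×ˢ Ioi (0:ℝ)) :=
      ContDiffOn.prodMk
        (contDiffOn_const.mul (ContDiffOn.log contDiffOn_snd fun p hp => ne_of_gt hp.2))
        (contDiffOn_const.add (contDiffOn_fst.mul (contDiffOn_snd.pow 2)))
    refine (contDiffOn_const.mul contDiffOn_snd).mul (hsmooth.comp h2 fun p hp => ?_)
    have h3 : 0 ≤ p.1 * p.2^2 := mul_nonneg hp.1.1 (sq_nonneg _)
    change 2*M ≤ 2*M + p.1*p.2^2
    linarith
  · intro a ha b hb
    have ha0 : 0 < a := ha.1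
    have hp : (4*M*Real.log b, 2*M + a*b^2) ∈ extSet M := by
      have : 0 < a*b^2 := by positivity
      change 2*M < 2*M + a*b^2
      linarith
    -- `4M log b` is the ingoing coordinate `v = t + r_*` of the point with coordinates `(a,b)`.
    have hv : 4*M*Real.log b - rstar M (2*M + a*b^2) = -(2*M)*Real.log a - 2*M - a*b^2 := by
      unfold rstar
      rw [show 2*M + a*b^2 - 2*M = a*b^2 by ring, Real.log_mul ha0.ne' (by positivity),
        Real.log_pow]
      push_cast
      ring
    have he : w (4*M*Real.log b, 2*M + a*b^2)
        = u (-(2*M)*Real.log a - 2*M - a*b^2) (2*M + a*b^2) := by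
      rw [← hv]
      rfl
    beta_reduce
    rw [extendFrom_extends hw.continuousOn _ hp, he, Utilde]
end

section
/- Let u be a λ-mode solution whose initial data (φ,ψ) are smooth on (2M,∞) and rapidly decreasing at r = ∞ together with all derivatives: for all k, N ∈ ℕ there is a constant C with |φ^{(k)}(r)| ≤ C·r^{−N} and |ψ^{(k)}(r)| ≤ C·r^{−N} for all r ≥ 4M. Then the rescaled solution extends smoothly to all of null infinity: there exists V′ : ℝ² → ℝ that is infinitely differentiable on ℝ × [0, 1/(2M)) (in the sense of ContDiffOn, with all within-derivatives extending continuously up to the boundary {ρ̄ = 0}) and satisfies V′(τ̄,ρ̄) = V(τ̄,ρ̄) for all τ̄ ∈ ℝ and all ρ̄ ∈ (0, 1/(2M)). (Smoothness up to null infinity for data Schwartz at r = ∞, for a single spherical-harmonic mode; Corollaries 3.8 and 3.11.) -/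
/-!
In the coordinates `(τ̄, ρ̄)` the rescaled solution satisfies
`2 ∂_τ̄ ∂_ρ̄ V + ∂_ρ̄ (q ∂_ρ̄ V) = (λ² + 2Mρ̄) V` with `q = ρ̄²(1 - 2Mρ̄)` (`null_wave`). The
coefficients are polynomial, so nothing is singular at `ρ̄ = 0`; by `extend_smooth` it suffices to
bound every mixed derivative `∂_τ̄^a ∂_ρ̄^k V` locally uniformly as `ρ̄ → 0`.

The bounds come from integration along incoming characteristics, starting at the surface `t = 0`
(`transport`). These start at `τ̄ = -∞` as null infinity is approached, so uniform bounds need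
decay as `τ̄ → -∞`. Rapid decrease of the data provides decay faster than every power of
`T + 1 - τ̄` on the surface `t = 0`, for every derivative `∂_ρ̄^k V` (`data_dec`). It propagates
to `V` by a contraction argument in the weight `(T + 1 - τ̄)^N`: one integration along a
characteristic and one in `ρ̄` reproduce the weight with a factor `O(1/N)`, which is at most `1/2`
for large `N` (`base_bound`). After `k` differentiations in `ρ̄` the equation becomes a transport
equation for `∂_ρ̄^(k+1) V` with a source of lower order (`commuted`), so the decay of all
`∂_ρ̄^k V` follows by induction (`reg_bound`). The derivatives in `τ̄` are then read off the
equation (`local_bound`).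

The propagation takes place in the far region `ρ̄ ≤ 1/(4M)`; bounds away from `ρ̄ = 0` are
compactness statements.
-/

open MeasureTheory Filter Set Function
open scoped ContDiff

/-- The rescaled solution near null infinity in the outgoing Eddington–Finkelstein
coordinates `τ̄ = t − r_*(r)`, `ρ̄ = 1/r`: `V(τ̄,ρ̄) = (1/ρ̄)·u(τ̄ + r_*(1/ρ̄), 1/ρ̄)`. -/
noncomputable def nullV (M : ℝ) (u : ℝ → ℝ → ℝ) (τ ρ : ℝ) : ℝ :=
  (1/ρ) * u (τ + rstar M (1/ρ)) (1/ρ)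

open scoped Topology

/-! ### Partial derivatives and smooth extension to a boundary line -/

/-- The partial derivative of `F` in its first variable, as a function on the plane.
It is a value of `fderiv`, so it is only meaningful where `F` is differentiable. -/
noncomputable def D1 (F : ℝ × ℝ → ℝ) (p : ℝ × ℝ) : ℝ := fderiv ℝ F p (1, 0)
/-- The partial derivative of `F` in its second variable, with the convention of `D1`. -/
noncomputable def D2 (F : ℝ × ℝ → ℝ) (p : ℝ × ℝ) : ℝ := fderiv ℝ F p (0, 1)

section calculus
variable {O : Set (ℝ × ℝ)} {F G : ℝ × ℝ → ℝ} {p : ℝ × ℝ}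

theorem D1_smooth (hO : IsOpen O) (hF : ContDiffOn ℝ ∞ F O) : ContDiffOn ℝ ∞ (D1 F) O :=
  (hF.fderiv_of_isOpen hO (by simp)).clm_apply contDiffOn_const

theorem D2_smooth (hO : IsOpen O) (hF : ContDiffOn ℝ ∞ F O) : ContDiffOn ℝ ∞ (D2 F) O :=
  (hF.fderiv_of_isOpen hO (by simp)).clm_apply contDiffOn_const

theorem D1_congr (hO : IsOpen O) (h : EqOn F G O) : EqOn (D1 F) (D1 G) O := fun p hp => by
  unfold D1; rw [(h.eventuallyEq_of_mem (hO.mem_nhds hp)).fderiv_eq]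

theorem D2_congr (hO : IsOpen O) (h : EqOn F G O) : EqOn (D2 F) (D2 G) O := fun p hp => by
  unfold D2; rw [(h.eventuallyEq_of_mem (hO.mem_nhds hp)).fderiv_eq]

theorem smooth_differentiableAt (hO : IsOpen O) (hF : ContDiffOn ℝ ∞ F O) (hp : p ∈ O) :
    DifferentiableAt ℝ F p :=
  (hF.contDiffAt (hO.mem_nhds hp)).differentiableAt (by simp)

theorem hasFDerivAt_D (hF : DifferentiableAt ℝ F p) :
    HasFDerivAt F (D1 F p • ContinuousLinearMap.fst ℝ ℝ ℝ
      + D2 F p • ContinuousLinearMap.snd ℝ ℝ ℝ) p := by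
  convert hF.hasFDerivAt using 1
  ext <;> simp [D1, D2]

/-- Equality of mixed partial derivatives of a smooth function on an open set. -/
theorem D_comm (hO : IsOpen O) (hF : ContDiffOn ℝ ∞ F O) (hp : p ∈ O) :
    D2 (D1 F) p = D1 (D2 F) p := by
  have hd : DifferentiableAt ℝ (fderiv ℝ F) p :=
    ((hF.fderiv_of_isOpen hO (m := ∞) (by simp)).contDiffAt (hO.mem_nhds hp)).differentiableAt
      (by simp)
  have hs : IsSymmSndFDerivAt ℝ F p :=
    (hF.contDiffAt (hO.mem_nhds hp)).isSymmSndFDerivAt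
      (by simpa using ENat.LEInfty.out)
  have h1 : ∀ v : ℝ × ℝ, fderiv ℝ (fun x => fderiv ℝ F x v) p
      = (fderiv ℝ (fderiv ℝ F) p).flip v := fun v => by
    rw [fderiv_clm_apply hd (by fun_prop)]; simp
  unfold D2 D1
  rw [h1, h1]
  exact hs _ _

/-- The chain rule along a curve in the plane. -/
theorem hasDerivAt_curve_s17 (hF : DifferentiableAt ℝ F p) {x y : ℝ → ℝ} {x' y' t : ℝ}
    (hx : HasDerivAt x x' t) (hy : HasDerivAt y y' t) (hp : (x t, y t) = p) :
    HasDerivAt (fun s => F (x s, y s)) (D1 F p * x' + D2 F p * y') t := by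
  subst hp
  have := (hasFDerivAt_D hF).comp_hasDerivAt t (hx.prodMk hy)
  simpa [Function.comp_def] using this

theorem D1_eq (hF : DifferentiableAt ℝ F p) : HasDerivAt (fun s => F (s, p.2)) (D1 F p) p.1 := by
  simpa using hasDerivAt_curve_s17 hF (hasDerivAt_id p.1) (hasDerivAt_const p.1 p.2) rfl

theorem D2_eq (hF : DifferentiableAt ℝ F p) : HasDerivAt (fun s => F (p.1, s)) (D2 F p) p.2 := by
  simpa using hasDerivAt_curve_s17 hF (hasDerivAt_const p.2 p.1) (hasDerivAt_id p.2) rfl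

end calculus

/-- Extension to a boundary line. Let `w a b` play the role of `∂₁^a ∂₂^b w` on the open strip
`0 < p.2 < c`. If every `w a b` is bounded near each bounded piece of the edge `p.2 = 0`, then
every `w a b` is Lipschitz there, hence has boundary limits, and the extension by these limits
is smooth up to the edge. -/
theorem extend_smooth {c c' : ℝ} (hc' : 0 < c') (hcc : c' < c) (w : ℕ → ℕ → ℝ × ℝ → ℝ)
    (hd : ∀ a b p, p.2 ∈ Ioo 0 c → HasFDerivAt (w a b)
      (w (a + 1) b p • ContinuousLinearMap.fst ℝ ℝ ℝ
        + w a (b + 1) p • ContinuousLinearMap.snd ℝ ℝ ℝ) p)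
    (hb : ∀ a b T, ∃ C, ∀ p : ℝ × ℝ, |p.1| ≤ T → p.2 ∈ Ioc 0 c' → |w a b p| ≤ C) :
    ContDiffOn ℝ ∞ (extendFrom ((univ : Set ℝ) ×ˢ Ioo 0 c) (w 0 0))
      ((univ : Set ℝ) ×ˢ Ico 0 c) := by
  set O : Set (ℝ × ℝ) := (univ : Set ℝ) ×ˢ Ioo 0 c with hO
  set S : Set (ℝ × ℝ) := (univ : Set ℝ) ×ˢ Ico 0 c with hS
  have hc : 0 < c := hc'.trans hcc
  have hOo : IsOpen O := isOpen_univ.prod isOpen_Ioo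
  have hScl : S ⊆ closure O := by
    rw [hO, closure_prod_eq, closure_univ, closure_Ioo hc.ne]
    exact prod_mono le_rfl Ico_subset_Icc_self
  -- boundary limits exist because each `w a b` is Lipschitz on bounded boxes at the edge
  have hlim : ∀ a b, ∀ p ∈ S, ∃ y, Tendsto (w a b) (𝓝[O] p) (𝓝 y) := by
    intro a b p hp
    rcases hp.2.1.eq_or_lt with h0 | h0
    · obtain ⟨C1, hC1⟩ := hb (a + 1) b (|p.1| + 1)
      obtain ⟨C2, hC2⟩ := hb a (b + 1) (|p.1| + 1)
      set B : Set (ℝ × ℝ) := Ioo (p.1 - 1) (p.1 + 1) ×ˢ Ioo 0 c' with hB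
      have hBm : ∀ x ∈ B, |x.1| ≤ |p.1| + 1 := by
        rintro x ⟨⟨h1, h2⟩, -⟩
        rw [abs_le]
        constructor <;> [linarith [neg_abs_le p.1]; linarith [le_abs_self p.1]]
      have hlip : LipschitzOnWith (Real.toNNReal (C1 + C2)) (w a b) B := by
        refine Convex.lipschitzOnWith_of_nnnorm_hasFDerivWithin_le (𝕜 := ℝ)
          (fun x hx => (hd a b x ⟨hx.2.1, hx.2.2.trans hcc⟩).hasFDerivWithinAt) ?_
          ((convex_Ioo _ _).prod (convex_Ioo _ _))
        intro x hx
        have h1 := hC1 x (hBm x hx) ⟨hx.2.1, hx.2.2.le⟩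
        have h2 := hC2 x (hBm x hx) ⟨hx.2.1, hx.2.2.le⟩
        rw [← NNReal.coe_le_coe, coe_nnnorm, Real.coe_toNNReal _
          (add_nonneg ((abs_nonneg _).trans h1) ((abs_nonneg _).trans h2))]
        refine (norm_add_le _ _).trans (add_le_add ?_ ?_)
        · rw [norm_smul]
          refine (mul_le_of_le_one_right (norm_nonneg _)
            (ContinuousLinearMap.norm_fst_le ℝ ℝ ℝ)).trans h1
        · rw [norm_smul]
          refine (mul_le_of_le_one_right (norm_nonneg _)
            (ContinuousLinearMap.norm_snd_le ℝ ℝ ℝ)).trans h2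
      obtain ⟨g, hg, hge⟩ := hlip.extend_real
      refine ⟨g p, (hg.continuous.continuousWithinAt (s := O) (x := p)).tendsto.congr' ?_⟩
      have hn : B ∈ 𝓝[O] p := by
        have : Ioo (p.1 - 1) (p.1 + 1) ×ˢ Iio c' ∈ 𝓝 p :=
          (isOpen_Ioo.prod isOpen_Iio).mem_nhds
            ⟨⟨by linarith, by linarith⟩, by rw [mem_Iio, ← h0]; exact hc'⟩
        filter_upwards [mem_nhdsWithin_of_mem_nhds this, self_mem_nhdsWithin] with x h1 h2
        exact ⟨h1.1, h2.2.1, h1.2⟩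
      filter_upwards [hn] with x hx using (hge hx).symm
    · exact ⟨_, (hd a b p ⟨h0, hp.2.2⟩).continuousAt.continuousWithinAt⟩
  set W : ℕ → ℕ → ℝ × ℝ → ℝ := fun a b => extendFrom O (w a b) with hW
  have hWc : ∀ a b, ContinuousOn (W a b) S := fun a b =>
    continuousOn_extendFrom hScl (hlim a b)
  have hWe : ∀ a b, EqOn (W a b) (w a b) O := fun a b p hp =>
    extendFrom_eq (subset_closure hp) (hd a b p hp.2).continuousAt.continuousWithinAt
  have hOS : O ⊆ S := prod_mono le_rfl Ioo_subset_Ico_self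
  have hWO : ∀ a b, ∀ p ∈ O, HasFDerivAt (W a b)
      (W (a + 1) b p • ContinuousLinearMap.fst ℝ ℝ ℝ
        + W a (b + 1) p • ContinuousLinearMap.snd ℝ ℝ ℝ) p := by
    intro a b p hp
    rw [hWe _ _ hp, hWe _ _ hp]
    exact (hd a b p hp.2).congr_of_eventuallyEq
      ((hWe a b).eventuallyEq_of_mem (hOo.mem_nhds hp))
  -- on the edge, the derivative is the limit of the derivatives at nearby interior points
  have hWd : ∀ a b, ∀ p ∈ S, HasFDerivWithinAt (W a b)
      (W (a + 1) b p • ContinuousLinearMap.fst ℝ ℝ ℝ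
        + W a (b + 1) p • ContinuousLinearMap.snd ℝ ℝ ℝ) S p := by
    intro a b p hp
    rcases hp.2.1.eq_or_lt with h0 | h0
    · set s : Set (ℝ × ℝ) := (univ : Set ℝ) ×ˢ Ioo 0 c' with hs
      have hso : IsOpen s := isOpen_univ.prod isOpen_Ioo
      have hsO : s ⊆ O := prod_mono le_rfl (Ioo_subset_Ioo_right hcc.le)
      have hcl : closure s = (univ : Set ℝ) ×ˢ Icc 0 c' := by
        rw [hs, closure_prod_eq, closure_univ, closure_Ioo hc'.ne]
      have hclS : closure s ⊆ S := by
        rw [hcl]; exact prod_mono le_rfl (fun x hx => ⟨hx.1, hx.2.trans_lt hcc⟩)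
      have key : HasFDerivWithinAt (W a b)
          (W (a + 1) b p • ContinuousLinearMap.fst ℝ ℝ ℝ
            + W a (b + 1) p • ContinuousLinearMap.snd ℝ ℝ ℝ) (closure s) p := by
        refine hasFDerivWithinAt_closure_of_tendsto_fderiv
          (fun x hx => (hWO a b x (hsO hx)).differentiableAt.differentiableWithinAt)
          (convex_univ.prod (convex_Ioo _ _)) hso
          (fun y hy => (hWc a b y (hclS hy)).mono (subset_closure.trans hclS)) ?_
        have h1 : Tendsto (W (a + 1) b) (𝓝[s] p) (𝓝 (W (a + 1) b p)) :=
          (hWc (a + 1) b p hp).mono (subset_closure.trans hclS)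
        have h2 : Tendsto (W a (b + 1)) (𝓝[s] p) (𝓝 (W a (b + 1) p)) :=
          (hWc a (b + 1) p hp).mono (subset_closure.trans hclS)
        refine ((h1.smul_const (ContinuousLinearMap.fst ℝ ℝ ℝ)).add
          (h2.smul_const (ContinuousLinearMap.snd ℝ ℝ ℝ))).congr' ?_
        filter_upwards [self_mem_nhdsWithin] with x hx
        exact (hWO a b x (hsO hx)).fderiv.symm
      refine key.mono_of_mem_nhdsWithin ?_
      have : (univ : Set ℝ) ×ˢ Iio c' ∈ 𝓝 p :=
        (isOpen_univ.prod isOpen_Iio).mem_nhds ⟨trivial, by rw [mem_Iio, ← h0]; exact hc'⟩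
      filter_upwards [mem_nhdsWithin_of_mem_nhds this, self_mem_nhdsWithin] with x hx1 hx2
      rw [hcl]
      exact ⟨trivial, hx2.2.1, le_of_lt hx1.2⟩
    · exact (hWO a b p ⟨trivial, h0, hp.2.2⟩).hasFDerivWithinAt
  have hu : UniqueDiffOn ℝ S := uniqueDiffOn_univ.prod (uniqueDiffOn_Ico 0 c)
  have main : ∀ n : ℕ, ∀ a b, ContDiffOn ℝ n (W a b) S := by
    intro n
    induction n with
    | zero => intro a b; exact contDiffOn_zero.2 (hWc a b)
    | succ n ih =>
      intro a b
      push_cast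
      refine (contDiffOn_succ_iff_hasFDerivWithinAt_of_uniqueDiffOn hu).2
        ⟨fun h => by simp at h, _, ?_, hWd a b⟩
      exact ((ih (a + 1) b).smul contDiffOn_const).add ((ih a (b + 1)).smul contDiffOn_const)
  exact contDiffOn_infty.2 fun n => main n 0 0

/-! ### The wave equation near null infinity -/

/-- The tortoise coordinate as a function of `ρ̄ = 1/r`. -/
noncomputable def sN (M ρ : ℝ) : ℝ := rstar M (1 / ρ)

/-- The coefficient `ρ̄²(1 - 2Mρ̄)`; it equals `-1/s'(ρ̄)` for `s = sN M`, see `sN_deriv`. -/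
noncomputable def qN (M ρ : ℝ) : ℝ := ρ ^ 2 * (1 - 2 * M * ρ)

/-- The derivative of `qN M`. -/
noncomputable def qN' (M ρ : ℝ) : ℝ := 2 * ρ - 6 * M * ρ ^ 2

/-- The exterior region in the coordinates `(τ̄, ρ̄)`: `ℝ × (0, 1/(2M))`. -/
def Om (M : ℝ) : Set (ℝ × ℝ) := (univ : Set ℝ) ×ˢ Ioo 0 (1 / (2 * M))

/-- The exterior region in the coordinates `(t, r)`: `ℝ × (2M, ∞)`. -/
def Ou (M : ℝ) : Set (ℝ × ℝ) := (univ : Set ℝ) ×ˢ Ioi (2 * M)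

theorem Om_open (M : ℝ) : IsOpen (Om M) := isOpen_univ.prod isOpen_Ioo
theorem Ou_open (M : ℝ) : IsOpen (Ou M) := isOpen_univ.prod isOpen_Ioi

section geometry
variable {M ρ : ℝ}

theorem one_sub_pos (hM : 0 < M) (hρ : ρ ∈ Ioo 0 (1 / (2 * M))) : 0 < 1 - 2 * M * ρ := by
  have := (lt_div_iff₀ (by positivity)).1 hρ.2
  linarith

theorem inv_gt (hM : 0 < M) (hρ : ρ ∈ Ioo 0 (1 / (2 * M))) : 2 * M < 1 / ρ := by
  rw [lt_div_iff₀ hρ.1]; linarith [one_sub_pos hM hρ]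

theorem qN_pos (hM : 0 < M) (hρ : ρ ∈ Ioo 0 (1 / (2 * M))) : 0 < qN M ρ :=
  mul_pos (pow_pos hρ.1 2) (one_sub_pos hM hρ)

theorem qN_deriv : HasDerivAt (qN M) (qN' M ρ) ρ := by
  unfold qN qN'
  refine ((hasDerivAt_pow 2 ρ).mul
    (((hasDerivAt_id ρ).const_mul (2 * M)).const_sub 1)).congr_deriv ?_
  simp; ring

theorem inv_deriv (hρ : 0 < ρ) : HasDerivAt (fun x : ℝ => 1 / x) (-(1 / ρ ^ 2)) ρ := by
  simpa [one_div] using hasDerivAt_inv hρ.ne'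

theorem rstar_deriv {r : ℝ} (hr : 2 * M < r) : HasDerivAt (rstar M) (r / (r - 2 * M)) r := by
  have h : r - 2 * M ≠ 0 := by linarith
  unfold rstar
  refine ((hasDerivAt_id r).add
    ((((hasDerivAt_id r).sub_const (2 * M)).log h).const_mul (2 * M))).congr_deriv ?_
  simp; field_simp; ring

theorem sN_deriv (hM : 0 < M) (hρ : ρ ∈ Ioo 0 (1 / (2 * M))) :
    HasDerivAt (sN M) (-(1 / qN M ρ)) ρ := by
  have h := (rstar_deriv (inv_gt hM hρ)).comp ρ (inv_deriv hρ.1)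
  have h0 := hρ.1.ne'
  have h1 := (one_sub_pos hM hρ).ne'
  have h2 : 1 / ρ - 2 * M ≠ 0 := by linarith [inv_gt hM hρ]
  refine h.congr_deriv ?_
  unfold qN
  have : 1 / ρ - 2 * M = (1 - 2 * M * ρ) / ρ := by field_simp
  rw [this]
  field_simp

end geometry

/-- The pull-back of a function of `(t, r)` to the coordinates `(τ̄, ρ̄)`. -/
noncomputable def pull (M : ℝ) (G : ℝ × ℝ → ℝ) (p : ℝ × ℝ) : ℝ := G (p.1 + sN M p.2, 1 / p.2)

section pull
variable {M : ℝ} {G : ℝ × ℝ → ℝ} {p : ℝ × ℝ}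

theorem pull_mem (hM : 0 < M) (hp : p ∈ Om M) : (p.1 + sN M p.2, 1 / p.2) ∈ Ou M :=
  ⟨trivial, inv_gt hM hp.2⟩

theorem pull_deriv1 (hM : 0 < M) (hG : ContDiffOn ℝ ∞ G (Ou M)) (hp : p ∈ Om M) :
    HasDerivAt (fun x => pull M G (x, p.2)) (pull M (D1 G) p) p.1 := by
  have := hasDerivAt_curve_s17 (smooth_differentiableAt (Ou_open M) hG (pull_mem hM hp))
    ((hasDerivAt_id p.1).add_const (sN M p.2)) (hasDerivAt_const p.1 (1 / p.2)) rfl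
  simpa [pull] using this

theorem pull_deriv2 (hM : 0 < M) (hG : ContDiffOn ℝ ∞ G (Ou M)) (hp : p ∈ Om M) :
    HasDerivAt (fun x => pull M G (p.1, x))
      (pull M (D1 G) p * -(1 / qN M p.2) + pull M (D2 G) p * -(1 / p.2 ^ 2)) p.2 := by
  have := hasDerivAt_curve_s17 (smooth_differentiableAt (Ou_open M) hG (pull_mem hM hp))
    ((sN_deriv hM hp.2).const_add p.1) (inv_deriv hp.2.1) rfl
  simpa only [pull] using this

theorem pull_smooth (hM : 0 < M) (hG : ContDiffOn ℝ ∞ G (Ou M)) :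
    ContDiffOn ℝ ∞ (pull M G) (Om M) := by
  have hi : ContDiffOn ℝ ∞ (fun p : ℝ × ℝ => 1 / p.2) (Om M) :=
    contDiffOn_const.div contDiffOn_snd (fun p hp => hp.2.1.ne')
  have hs : ContDiffOn ℝ ∞ (fun p : ℝ × ℝ => sN M p.2) (Om M) := by
    unfold sN rstar
    refine hi.add (contDiffOn_const.mul ((hi.sub contDiffOn_const).log fun p hp => ?_))
    linarith [inv_gt hM hp.2]
  exact hG.comp ((contDiffOn_fst.add hs).prodMk hi) (fun p hp => pull_mem hM hp)

end pull

theorem nullV_eq (M : ℝ) (u : ℝ → ℝ → ℝ) (p : ℝ × ℝ) :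
    uncurry (nullV M u) p = (1 / p.2) * pull M (uncurry u) p := rfl

theorem nullV_smooth {M : ℝ} (hM : 0 < M) {u : ℝ → ℝ → ℝ}
    (hu : ContDiffOn ℝ ∞ (uncurry u) (Ou M)) : ContDiffOn ℝ ∞ (uncurry (nullV M u)) (Om M) :=
  (contDiffOn_const.div contDiffOn_snd (fun p hp => hp.2.1.ne')).mul (pull_smooth hM hu)

section wave
variable {M lam : ℝ} {u : ℝ → ℝ → ℝ} {p : ℝ × ℝ}

theorem pdt_eq_s17 (hu : ContDiffOn ℝ ∞ (uncurry u) (Ou M)) (hp : p ∈ Ou M) :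
    pdt u p.1 p.2 = D1 (uncurry u) p :=
  (D1_eq (smooth_differentiableAt (Ou_open M) hu hp)).deriv

theorem pdr_eq (hu : ContDiffOn ℝ ∞ (uncurry u) (Ou M)) (hp : p ∈ Ou M) :
    pdr u p.1 p.2 = D2 (uncurry u) p :=
  (D2_eq (smooth_differentiableAt (Ou_open M) hu hp)).deriv

theorem pdtt_eq (hu : ContDiffOn ℝ ∞ (uncurry u) (Ou M)) (hp : p ∈ Ou M) :
    pdtt u p.1 p.2 = D1 (D1 (uncurry u)) p := by
  rw [← (D1_eq (smooth_differentiableAt (Ou_open M) (D1_smooth (Ou_open M) hu) hp)).deriv]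
  have : (fun s => pdt u s p.2) = fun s => D1 (uncurry u) (s, p.2) := by
    funext s; exact pdt_eq_s17 (p := (s, p.2)) hu ⟨trivial, hp.2⟩
  rw [pdtt, this]

theorem pdrr_eq (hu : ContDiffOn ℝ ∞ (uncurry u) (Ou M)) (hp : p ∈ Ou M) :
    pdrr u p.1 p.2 = D2 (D2 (uncurry u)) p := by
  rw [← (D2_eq (smooth_differentiableAt (Ou_open M) (D2_smooth (Ou_open M) hu) hp)).deriv]
  have : (fun s => pdr u p.1 s) =ᶠ[𝓝 p.2] fun s => D2 (uncurry u) (p.1, s) := by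
    filter_upwards [isOpen_Ioi.mem_nhds hp.2] with s hs
    exact pdr_eq (p := (p.1, s)) hu ⟨trivial, hs⟩
  rw [pdrr, this.deriv_eq]

/-- The chain rule for `∂_ρ̄ V`, in terms of `u` and its first derivatives. -/
theorem D2_nullV (hM : 0 < M) (hu : ContDiffOn ℝ ∞ (uncurry u) (Ou M)) (hp : p ∈ Om M) :
    D2 (uncurry (nullV M u)) p = -(1 / p.2 ^ 2) * pull M (uncurry u) p + (1 / p.2) *
      (pull M (D1 (uncurry u)) p * -(1 / qN M p.2)
        + pull M (D2 (uncurry u)) p * -(1 / p.2 ^ 2)) :=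
  (D2_eq (smooth_differentiableAt (Om_open M) (nullV_smooth hM hu) hp)).unique
    ((inv_deriv hp.2.1).mul (pull_deriv2 hM hu hp))

/-- The wave equation for `V` in the coordinates `(τ̄, ρ̄)`:
`2 ∂_τ̄ ∂_ρ̄ V + ∂_ρ̄ (ρ̄²(1 - 2Mρ̄) ∂_ρ̄ V) = (λ² + 2Mρ̄) V`. Its coefficients are polynomial in
`ρ̄`, hence regular at null infinity. -/
theorem null_wave (hM : 0 < M) (hu : IsModeSolution M lam u) (hp : p ∈ Om M) :
    2 * D1 (D2 (uncurry (nullV M u))) p + qN M p.2 * D2 (D2 (uncurry (nullV M u))) p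
      + qN' M p.2 * D2 (uncurry (nullV M u)) p
      = (lam ^ 2 + 2 * M * p.2) * uncurry (nullV M u) p := by
  have hs : ContDiffOn ℝ ∞ (uncurry u) (Ou M) := hu.1
  have h1s := D1_smooth (Ou_open M) hs
  have h2s := D2_smooth (Ou_open M) hs
  have hVs := D2_smooth (Om_open M) (nullV_smooth hM hs)
  have hd := smooth_differentiableAt (Om_open M) hVs hp
  have hq0 := (qN_pos hM hp.2).ne'
  have h0 := hp.2.1.ne'
  have e1 : D1 (D2 (uncurry (nullV M u))) p = -(1 / p.2 ^ 2) * pull M (D1 (uncurry u)) p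
      + (1 / p.2) * (pull M (D1 (D1 (uncurry u))) p * -(1 / qN M p.2)
        + pull M (D1 (D2 (uncurry u))) p * -(1 / p.2 ^ 2)) := by
    refine (D1_eq hd).unique ?_
    refine HasDerivAt.congr_of_eventuallyEq
      (((pull_deriv1 hM hs hp).const_mul _).add
        ((((pull_deriv1 hM h1s hp).mul_const _).add
          ((pull_deriv1 hM h2s hp).mul_const _)).const_mul _)) ?_
    exact Eventually.of_forall fun x => D2_nullV (p := (x, p.2)) hM hs ⟨trivial, hp.2⟩
  have e2 : D2 (D2 (uncurry (nullV M u))) p =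
      (2 / p.2 ^ 3) * pull M (uncurry u) p + -(1 / p.2 ^ 2) *
        (pull M (D1 (uncurry u)) p * -(1 / qN M p.2)
          + pull M (D2 (uncurry u)) p * -(1 / p.2 ^ 2))
      + (-(1 / p.2 ^ 2) * (pull M (D1 (uncurry u)) p * -(1 / qN M p.2)
        + pull M (D2 (uncurry u)) p * -(1 / p.2 ^ 2))
      + (1 / p.2) * (((pull M (D1 (D1 (uncurry u))) p * -(1 / qN M p.2)
          + pull M (D2 (D1 (uncurry u))) p * -(1 / p.2 ^ 2)) * -(1 / qN M p.2)
          + pull M (D1 (uncurry u)) p * (qN' M p.2 / qN M p.2 ^ 2))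
        + ((pull M (D1 (D2 (uncurry u))) p * -(1 / qN M p.2)
          + pull M (D2 (D2 (uncurry u))) p * -(1 / p.2 ^ 2)) * -(1 / p.2 ^ 2)
          + pull M (D2 (uncurry u)) p * (2 / p.2 ^ 3)))) := by
    have d1 : HasDerivAt (fun x : ℝ => -(1 / x ^ 2)) (2 / p.2 ^ 3) p.2 := by
      refine (((hasDerivAt_const p.2 (1 : ℝ)).div (hasDerivAt_pow 2 p.2)
        (pow_ne_zero 2 h0)).neg).congr_deriv ?_
      simp; field_simp
    have d2 : HasDerivAt (fun x : ℝ => -(1 / qN M x)) (qN' M p.2 / qN M p.2 ^ 2) p.2 := by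
      refine (((hasDerivAt_const p.2 (1 : ℝ)).div qN_deriv hq0).neg).congr_deriv ?_
      ring
    refine (D2_eq hd).unique ?_
    refine HasDerivAt.congr_of_eventuallyEq
      ((d1.mul (pull_deriv2 hM hs hp)).add
        ((inv_deriv hp.2.1).mul (((pull_deriv2 hM h1s hp).mul d2).add
          ((pull_deriv2 hM h2s hp).mul d1)))) ?_
    filter_upwards [isOpen_Ioo.mem_nhds hp.2] with x hx
    exact D2_nullV (p := (p.1, x)) hM hs ⟨trivial, hx⟩
  have hw := hu.2 (p.1 + sN M p.2) (1 / p.2) (inv_gt hM hp.2)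
  have hm := pull_mem hM hp
  rw [pdtt_eq (p := (p.1 + sN M p.2, 1 / p.2)) hs hm,
    pdrr_eq (p := (p.1 + sN M p.2, 1 / p.2)) hs hm,
    pdr_eq (p := (p.1 + sN M p.2, 1 / p.2)) hs hm] at hw
  have hc : pull M (D2 (D1 (uncurry u))) p = pull M (D1 (D2 (uncurry u))) p :=
    D_comm (Ou_open M) hs hm
  change -((1 / p.2) / (1 / p.2 - 2 * M)) * pull M (D1 (D1 (uncurry u))) p
    + ((1 / p.2 - 2 * M) / (1 / p.2)) * pull M (D2 (D2 (uncurry u))) p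
    + (2 * (1 / p.2 - M) / (1 / p.2) ^ 2) * pull M (D2 (uncurry u)) p
    - lam ^ 2 / (1 / p.2) ^ 2 * pull M (uncurry u) p = 0 at hw
  rw [e1, e2, D2_nullV hM hs hp, nullV_eq, hc]
  have hf := (one_sub_pos hM hp.2).ne'
  generalize p.2 = ρ at *
  generalize pull M (uncurry u) p = U at *
  generalize pull M (D1 (uncurry u)) p = U1 at *
  generalize pull M (D2 (uncurry u)) p = U2 at *
  generalize pull M (D1 (D1 (uncurry u))) p = U11 at *
  generalize pull M (D1 (D2 (uncurry u))) p = U12 at *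
  generalize pull M (D2 (D2 (uncurry u))) p = U22 at *
  have hr : 1 / ρ - 2 * M = (1 - 2 * M * ρ) / ρ := by field_simp
  rw [hr] at hw
  have hw2 : -(1 / (1 - 2 * M * ρ)) * U11 + (1 - 2 * M * ρ) * U22
      + (2 * (ρ - M * ρ ^ 2)) * U2 - lam ^ 2 * ρ ^ 2 * U = 0 := by
    rw [← hw]; field_simp
  rw [← sub_eq_zero]
  have : (1 / ρ ^ 3) * (-(1 / (1 - 2 * M * ρ)) * U11 + (1 - 2 * M * ρ) * U22
      + (2 * (ρ - M * ρ ^ 2)) * U2 - lam ^ 2 * ρ ^ 2 * U) = 0 := by rw [hw2, mul_zero]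
  rw [← this]
  unfold qN' qN
  -- with `f = 1 - 2Mρ̄` as the parameter in place of `M`, all denominators are monomials
  obtain ⟨f, rfl⟩ : ∃ f, M = (1 - f) / (2 * ρ) := ⟨1 - 2 * M * ρ, by field_simp; ring⟩
  have hf' : 1 - 2 * ((1 - f) / (2 * ρ)) * ρ = f := by field_simp; ring
  rw [hf'] at hf ⊢
  field_simp
  ring

end wave

/-! ### Differentiating the equation -/

/-- The mixed derivative `∂_τ̄^a ∂_ρ̄^k F`. -/
noncomputable def mix (F : ℝ × ℝ → ℝ) (a k : ℕ) : ℝ × ℝ → ℝ := D1^[a] (D2^[k] F)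

section mix
variable {O : Set (ℝ × ℝ)} {F : ℝ × ℝ → ℝ}

theorem D1_mix (F : ℝ × ℝ → ℝ) (a k : ℕ) : D1 (mix F a k) = mix F (a + 1) k :=
  (iterate_succ_apply' D1 a _).symm

theorem D2_mix_zero (F : ℝ × ℝ → ℝ) (k : ℕ) : D2 (mix F 0 k) = mix F 0 (k + 1) :=
  (iterate_succ_apply' D2 k _).symm

theorem mix_smooth (hO : IsOpen O) (hF : ContDiffOn ℝ ∞ F O) (a k : ℕ) :
    ContDiffOn ℝ ∞ (mix F a k) O := by
  induction a with
  | zero =>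
    induction k with
    | zero => exact hF
    | succ k ih => rw [← D2_mix_zero]; exact D2_smooth hO ih
  | succ a ih => rw [← D1_mix]; exact D1_smooth hO ih

theorem D2_mix (hO : IsOpen O) (hF : ContDiffOn ℝ ∞ F O) (a k : ℕ) :
    EqOn (D2 (mix F a k)) (mix F a (k + 1)) O := by
  induction a with
  | zero => rw [D2_mix_zero]; exact fun _ _ => rfl
  | succ a ih =>
    intro p hp
    rw [← D1_mix, D_comm hO (mix_smooth hO hF a k) hp, D1_congr hO ih hp, D1_mix]

theorem mix_deriv1 (hO : IsOpen O) (hF : ContDiffOn ℝ ∞ F O) (a k : ℕ) {p : ℝ × ℝ} (hp : p ∈ O) :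
    HasDerivAt (fun x => mix F a k (x, p.2)) (mix F (a + 1) k p) p.1 := by
  rw [← D1_mix]; exact D1_eq (smooth_differentiableAt hO (mix_smooth hO hF a k) hp)

theorem mix_deriv2 (hO : IsOpen O) (hF : ContDiffOn ℝ ∞ F O) (a k : ℕ) {p : ℝ × ℝ} (hp : p ∈ O) :
    HasDerivAt (fun x => mix F a k (p.1, x)) (mix F a (k + 1) p) p.2 := by
  rw [← D2_mix hO hF a k hp]; exact D2_eq (smooth_differentiableAt hO (mix_smooth hO hF a k) hp)

end mix

/-- `k`-fold `∂_ρ̄`-derivative of the rescaled wave equation. The coefficient of `∂_ρ̄ (∂_ρ̄^k F)`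
becomes `(k + 1) q'`; the right-hand side involves only derivatives of order `k` and `k - 1`,
because `q` is a cubic polynomial. The clause `k = 0 → b = 0` makes the truncated `k - 1` harmless. -/
theorem commuted_zero {M l : ℝ} {F : ℝ × ℝ → ℝ} (hF : ContDiffOn ℝ ∞ F (Om M))
    (hw : ∀ p ∈ Om M, 2 * D1 (D2 F) p + qN M p.2 * D2 (D2 F) p + qN' M p.2 * D2 F p
      = (l + 2 * M * p.2) * F p) (k : ℕ) :
    ∃ a0 a1 b : ℝ, (k = 0 → b = 0) ∧ ∀ p ∈ Om M,
      2 * mix F 1 (k + 1) p + qN M p.2 * mix F 0 (k + 2) p + (k + 1) * qN' M p.2 * mix F 0 (k + 1) p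
        = (a0 + a1 * p.2) * mix F 0 k p + b * mix F 0 (k - 1) p := by
  induction k with
  | zero =>
    refine ⟨l, 2 * M, 0, fun _ => rfl, fun p hp => ?_⟩
    have := hw p hp
    simp only [mix, iterate_succ, iterate_zero, comp_apply, id] at *
    push_cast
    linarith
  | succ k ih =>
    obtain ⟨a0, a1, b, hb, h⟩ := ih
    refine ⟨a0 - (k + 1) * 2, a1 + (k + 1) * (12 * M), a1 + b, fun h => by simp at h,
      fun p hp => ?_⟩
    have d := fun a k => mix_deriv2 (Om_open M) hF a k hp
    have dq' : HasDerivAt (qN' M) (2 - 12 * M * p.2) p.2 := by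
      refine (((hasDerivAt_id p.2).const_mul 2).sub
        ((hasDerivAt_pow 2 p.2).const_mul (6 * M))).congr_deriv ?_
      simp; ring
    have hL := (((d 1 (k + 1)).const_mul 2).add ((qN_deriv (M := M)).mul (d 0 (k + 2)))).add
      ((dq'.const_mul ((k : ℝ) + 1)).mul (d 0 (k + 1)))
    have hR := ((((hasDerivAt_id p.2).const_mul a1).const_add a0).mul (d 0 k)).add
      ((d 0 (k - 1)).const_mul b)
    have hev := hL.congr_of_eventuallyEq (f₁ := fun x => (a0 + a1 * x) * mix F 0 k (p.1, x)
      + b * mix F 0 (k - 1) (p.1, x)) (by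
        filter_upwards [isOpen_Ioo.mem_nhds hp.2] with x hx
        exact (h (p.1, x) ⟨trivial, hx⟩).symm)
    have key := hev.unique hR
    have hbk : b * mix F 0 (k - 1 + 1) p = b * mix F 0 k p := by
      rcases k with _ | k
      · rw [hb rfl]; simp
      · simp
    simp only [hbk, id, mul_one, Nat.add_sub_cancel] at key ⊢
    push_cast
    linear_combination key

/-- The relation of `commuted_zero` differentiated `a` times in `τ̄`, on which its coefficients
do not depend. -/
theorem commuted {M l : ℝ} {F : ℝ × ℝ → ℝ} (hF : ContDiffOn ℝ ∞ F (Om M))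
    (hw : ∀ p ∈ Om M, 2 * D1 (D2 F) p + qN M p.2 * D2 (D2 F) p + qN' M p.2 * D2 F p
      = (l + 2 * M * p.2) * F p) (k : ℕ) :
    ∃ a0 a1 b : ℝ, ∀ a : ℕ, ∀ p ∈ Om M,
      2 * mix F (a + 1) (k + 1) p + qN M p.2 * mix F a (k + 2) p
        + (k + 1) * qN' M p.2 * mix F a (k + 1) p
        = (a0 + a1 * p.2) * mix F a k p + b * mix F a (k - 1) p := by
  obtain ⟨a0, a1, b, -, h⟩ := commuted_zero hF hw k
  refine ⟨a0, a1, b, fun a => ?_⟩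
  induction a with
  | zero => exact h
  | succ a ih =>
    intro p hp
    have d := fun a k => mix_deriv1 (Om_open M) hF a k hp
    have hL := (((d (a + 1) (k + 1)).const_mul 2).add ((d a (k + 2)).const_mul (qN M p.2))).add
      ((d a (k + 1)).const_mul (((k : ℝ) + 1) * qN' M p.2))
    have hR := ((d a k).const_mul (a0 + a1 * p.2)).add ((d a (k - 1)).const_mul b)
    exact (hL.congr_of_eventuallyEq (Eventually.of_forall fun x =>
      (ih (x, p.2) ⟨trivial, hp.2⟩).symm)).unique hR

/-! ### Rapidly decreasing data -/

/-- `F` is smooth on `(2M, ∞)` and decreases faster than every power of `1/r` at infinity. The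
bound is stated in the product form `|F r| * r ^ N ≤ C`. -/
def Dec0 (M : ℝ) (F : ℝ → ℝ) : Prop :=
  ContDiffOn ℝ ∞ F (Ioi (2 * M)) ∧ ∀ N : ℕ, ∃ C, ∀ r, 4 * M ≤ r → |F r| * r ^ N ≤ C

/-- `F` and its first `j` derivatives are smooth on `(2M, ∞)` and rapidly decreasing. -/
def Dec (M : ℝ) : ℕ → (ℝ → ℝ) → Prop
  | 0, F => Dec0 M F
  | j + 1, F => Dec0 M F ∧ Dec M j (deriv F)

section Dec
variable {M : ℝ}

theorem Dec.mk0 {F : ℝ → ℝ} (h : ContDiffOn ℝ ∞ F (Ioi (2 * M)))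
    (h' : ∀ N : ℕ, ∃ C, ∀ r, 4 * M ≤ r → |F r| * r ^ N ≤ C) : Dec M 0 F := ⟨h, h'⟩

theorem Dec.smooth {F : ℝ → ℝ} (h : Dec M 0 F) : ContDiffOn ℝ ∞ F (Ioi (2 * M)) := And.left h

theorem Dec.bound {F : ℝ → ℝ} (h : Dec M 0 F) (N : ℕ) :
    ∃ C, ∀ r, 4 * M ≤ r → |F r| * r ^ N ≤ C := And.right h N

theorem Dec.mkS {j : ℕ} {F : ℝ → ℝ} (h : Dec M 0 F) (h' : Dec M j (deriv F)) :
    Dec M (j + 1) F := ⟨h, h'⟩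

theorem Dec.head {j : ℕ} {F : ℝ → ℝ} (h : Dec M (j + 1) F) : Dec M 0 F := And.left h

theorem Dec.tail {j : ℕ} {F : ℝ → ℝ} (h : Dec M (j + 1) F) : Dec M j (deriv F) := And.right h

theorem Dec.zero {j : ℕ} {F : ℝ → ℝ} (h : Dec M j F) : Dec M 0 F := by
  cases j with
  | zero => exact h
  | succ j => exact h.head

theorem Dec.hasDerivAt {j : ℕ} {F : ℝ → ℝ} (h : Dec M j F) {r : ℝ} (hr : 2 * M < r) :
    HasDerivAt F (deriv F r) r :=
  ((h.zero.smooth.contDiffAt (isOpen_Ioi.mem_nhds hr)).differentiableAt (by simp)).hasDerivAt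

theorem Dec.pred {j : ℕ} {F : ℝ → ℝ} (h : Dec M (j + 1) F) : Dec M j F := by
  induction j generalizing F with
  | zero => exact h.head
  | succ j ih => exact Dec.mkS h.head (ih h.tail)

theorem Dec.congr (hM : 0 < M) {j : ℕ} {F G : ℝ → ℝ} (h : Dec M j F) (he : EqOn F G (Ioi (2 * M))) :
    Dec M j G := by
  induction j generalizing F G with
  | zero =>
    refine Dec.mk0 (h.smooth.congr fun x hx => (he hx).symm) fun N => ?_
    obtain ⟨C, hC⟩ := h.bound N
    exact ⟨C, fun r hr => by rw [← he (show 2 * M < r by linarith)]; exact hC r hr⟩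
  | succ j ih =>
    refine Dec.mkS ?_
      (ih h.tail fun x hx => (he.eventuallyEq_of_mem (isOpen_Ioi.mem_nhds hx)).deriv_eq)
    refine Dec.mk0 (h.head.smooth.congr fun x hx => (he hx).symm) fun N => ?_
    obtain ⟨C, hC⟩ := h.head.bound N
    exact ⟨C, fun r hr => by rw [← he (show 2 * M < r by linarith)]; exact hC r hr⟩

/-- To show that `F` has `j + 1` rapidly decreasing derivatives it suffices to treat any function
that agrees with the derivative of `F` on `(2M, ∞)`. -/
theorem Dec.step (hM : 0 < M) {j : ℕ} {F F' : ℝ → ℝ} (h0 : Dec M 0 F) (h' : Dec M j F')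
    (hd : ∀ r, 2 * M < r → HasDerivAt F (F' r) r) : Dec M (j + 1) F :=
  Dec.mkS h0 (h'.congr hM fun r hr => (hd r hr).deriv.symm)

theorem Dec.add (hM : 0 < M) {j : ℕ} {F G : ℝ → ℝ} (hF : Dec M j F) (hG : Dec M j G) :
    Dec M j (fun r => F r + G r) := by
  induction j generalizing F G with
  | zero =>
    refine Dec.mk0 (hF.smooth.add hG.smooth) fun N => ?_
    obtain ⟨C1, h1⟩ := hF.bound N
    obtain ⟨C2, h2⟩ := hG.bound N
    refine ⟨C1 + C2, fun r hr => ?_⟩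
    have hr0 : 0 ≤ r := by linarith
    have := mul_le_mul_of_nonneg_right (abs_add_le (F r) (G r)) (pow_nonneg hr0 N)
    linarith [h1 r hr, h2 r hr]
  | succ j ih =>
    exact Dec.step hM (Dec.zero (ih hF.pred hG.pred)) (ih hF.tail hG.tail)
      fun r hr => (hF.hasDerivAt hr).add (hG.hasDerivAt hr)

theorem Dec.smul (hM : 0 < M) {j : ℕ} {F : ℝ → ℝ} (hF : Dec M j F) (c : ℝ) :
    Dec M j (fun r => c * F r) := by
  induction j generalizing F with
  | zero =>
    refine Dec.mk0 (contDiffOn_const.mul hF.smooth) fun N => ?_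
    obtain ⟨C1, h1⟩ := hF.bound N
    refine ⟨|c| * C1, fun r hr => ?_⟩
    rw [abs_mul, mul_assoc]
    exact mul_le_mul_of_nonneg_left (h1 r hr) (abs_nonneg c)
  | succ j ih =>
    exact Dec.step hM (Dec.zero (ih hF.pred)) (ih hF.tail)
      fun r hr => (hF.hasDerivAt hr).const_mul c

theorem Dec.mul_id (hM : 0 < M) {j : ℕ} {F : ℝ → ℝ} (hF : Dec M j F) :
    Dec M j (fun r => r * F r) := by
  induction j generalizing F with
  | zero =>
    refine Dec.mk0 (contDiffOn_id.mul hF.smooth) fun N => ?_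
    obtain ⟨C1, h1⟩ := hF.bound (N + 1)
    refine ⟨C1, fun r hr => ?_⟩
    have hr0 : 0 ≤ r := by linarith
    rw [abs_mul, abs_of_nonneg hr0]
    exact (h1 r hr).trans' (le_of_eq (by ring))
  | succ j ih =>
    refine Dec.step hM (Dec.zero (ih hF.pred)) (hF.pred.add hM (ih hF.tail))
      fun r hr => ((hasDerivAt_id r).mul (hF.hasDerivAt hr)).congr_deriv (by simp)

theorem Dec.mul_inv (hM : 0 < M) {a : ℝ} (ha : a ≤ 2 * M) {j : ℕ} {F : ℝ → ℝ}
    (hF : Dec M j F) : Dec M j (fun r => (r - a)⁻¹ * F r) := by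
  induction j generalizing F with
  | zero =>
    refine Dec.mk0 (((contDiffOn_id.sub contDiffOn_const).inv fun r hr => ?_).mul hF.smooth)
      fun N => ?_
    · have : 2 * M < r := hr
      simp only [id]; linarith
    obtain ⟨C1, h1⟩ := hF.bound N
    refine ⟨(2 * M)⁻¹ * C1, fun r hr => ?_⟩
    have hra : 2 * M ≤ r - a := by linarith
    have hr0 : 0 ≤ r := by linarith
    rw [abs_mul, mul_assoc, abs_of_pos (inv_pos.2 (by linarith))]
    have hi : (r - a)⁻¹ ≤ (2 * M)⁻¹ := inv_anti₀ (by linarith) hra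
    exact mul_le_mul hi (h1 r hr) (by positivity) (by positivity)
  | succ j ih =>
    refine Dec.step hM (Dec.zero (ih hF.pred))
      ((ih hF.tail).add hM ((ih (ih hF.pred)).smul hM (-1))) fun r hr => ?_
    have h0 : r - a ≠ 0 := by linarith
    refine ((((hasDerivAt_id r).sub_const a).inv h0).mul (hF.hasDerivAt hr)).congr_deriv ?_
    simp only [id, Pi.inv_apply]
    field_simp
    ring

/-- Passage from decay of the iterated derivatives, as bounds by real powers, to `Dec`. -/
theorem Dec.of_iteratedDeriv (hM : 0 < M) {F : ℝ → ℝ} (hs : ContDiffOn ℝ ∞ F (Ioi (2 * M)))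
    (h : ∀ k N : ℕ, ∃ C : ℝ, ∀ r : ℝ, 4 * M ≤ r →
      |iteratedDeriv k F r| ≤ C * r ^ (-(N : ℝ))) (j : ℕ) : Dec M j F := by
  have h0 : ∀ F : ℝ → ℝ, ContDiffOn ℝ ∞ F (Ioi (2 * M)) → (∀ k N : ℕ, ∃ C : ℝ, ∀ r : ℝ, 4 * M ≤ r →
      |iteratedDeriv k F r| ≤ C * r ^ (-(N : ℝ))) → Dec M 0 F := by
    intro F hs h
    refine Dec.mk0 hs fun N => ?_
    obtain ⟨C, hC⟩ := h 0 N
    refine ⟨C, fun r hr => ?_⟩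
    have hr0 : 0 < r := by linarith
    have := hC r hr
    rw [iteratedDeriv_zero, Real.rpow_neg hr0.le, Real.rpow_natCast, ← div_eq_mul_inv,
      le_div_iff₀ (by positivity)] at this
    exact this
  induction j generalizing F with
  | zero => exact h0 F hs h
  | succ j ih =>
    refine Dec.mkS (h0 F hs h) (ih (hs.deriv_of_isOpen isOpen_Ioi (by simp)) fun k N => ?_)
    simpa only [iteratedDeriv_succ'] using h (k + 1) N

end Dec

/-- All derivatives `∂_ρ̄^k V` are rapidly decreasing along the initial surface `t = 0`, which is
the curve `r ↦ (-r_*(r), 1/r)`. For `k ≤ 1` this is the chain rule. For the next order, the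
derivative of `∂_ρ̄^(k+1) V` along the curve and the differentiated wave equation are two linear
equations for `∂_τ̄ ∂_ρ̄^(k+1) V` and `∂_ρ̄^(k+2) V`, and are solved for the latter. -/
theorem data_dec {M lam : ℝ} (hM : 0 < M) {u : ℝ → ℝ → ℝ} (hu : IsModeSolution M lam u)
    (hφ : ∀ j, Dec M j (fun r => u 0 r)) (hψ : ∀ j, Dec M j (fun r => pdt u 0 r)) (k j : ℕ) :
    Dec M j (fun r => mix (uncurry (nullV M u)) 0 k (-rstar M r, 1 / r)) := by
  have hs : ContDiffOn ℝ ∞ (uncurry u) (Ou M) := hu.1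
  set V := uncurry (nullV M u) with hV
  have hVs : ContDiffOn ℝ ∞ V (Om M) := nullV_smooth hM hs
  have hmem : ∀ r, 2 * M < r → ((-rstar M r, 1 / r) : ℝ × ℝ) ∈ Om M := fun r hr =>
    ⟨trivial, one_div_pos.2 (by linarith), one_div_lt_one_div_of_lt (by linarith) hr⟩
  have hpull : ∀ (G : ℝ × ℝ → ℝ) r, pull M G (-rstar M r, 1 / r) = G (0, r) := fun G r => by
    simp [pull, sN]
  induction k using Nat.strong_induction_on generalizing j with
  | _ k ih =>
  rcases k with _ | _ | k
  · refine ((hφ j).mul_id hM).congr hM fun r hr => ?_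
    change _ = V _
    rw [hV, nullV_eq, hpull]
    simp [uncurry]
  · have h2 := ((((hφ j).mul_id hM).mul_id hM).smul hM (-1)).add hM
      ((((((((hψ j).mul_id hM).mul_id hM).mul_id hM).mul_id hM).mul_inv hM le_rfl).smul hM (-1)).add
        hM (((((hφ (j + 1)).tail.mul_id hM).mul_id hM).mul_id hM).smul hM (-1)))
    refine h2.congr hM fun r hr => ?_
    have hr : 2 * M < r := hr
    have hr0 : r ≠ 0 := by linarith
    have hr1 : r - 2 * M ≠ 0 := by linarith
    change _ = D2 V _
    rw [hV, D2_nullV hM hs (hmem r hr), hpull, hpull, hpull,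
      ← pdt_eq_s17 (p := (0, r)) hs ⟨trivial, hr⟩, ← pdr_eq (p := (0, r)) hs ⟨trivial, hr⟩]
    simp only [pdr, uncurry, qN]
    have : 1 - 2 * M * (1 / r) = (r - 2 * M) / r := by field_simp
    rw [this]
    field_simp
  · obtain ⟨a0, a1, b, hrel⟩ := commuted hVs (fun p hp => null_wave hM hu hp) k
    have e1 := ih (k + 1) (by lia)
    have e0 := ih k (by lia) j
    have em := ih (k - 1) (by lia) j
    have hsum := ((((((e1 j).smul hM (-((k : ℝ) + 1) * 2)).mul_inv hM (a := 0) (by linarith)).add hM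
      ((((e1 j).smul hM (((k : ℝ) + 1) * 6 * M)).mul_inv hM (a := 0) (by linarith)).mul_inv hM
        (a := 0) (by linarith))).add hM
      ((e0.smul hM a0).add hM ((e0.smul hM a1).mul_inv hM (a := 0) (by linarith)))).add hM
        (em.smul hM b))
    have htot := (((((e1 (j + 1)).tail.mul_id hM).mul_id hM).smul hM (-2))).add hM
      (((((hsum.mul_id hM).mul_id hM).mul_id hM).mul_inv hM le_rfl).smul hM (-1))
    refine htot.congr hM fun r hr => ?_
    have hr : 2 * M < r := hr
    have hr0 : r ≠ 0 := by linarith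
    have hr1 : r - 2 * M ≠ 0 := by linarith
    have hp := hmem r hr
    have hder : deriv (fun r => mix V 0 (k + 1) (-rstar M r, 1 / r)) r
        = mix V 1 (k + 1) (-rstar M r, 1 / r) * -(r / (r - 2 * M))
          + mix V 0 (k + 2) (-rstar M r, 1 / r) * -(1 / r ^ 2) := by
      have := hasDerivAt_curve_s17
        (smooth_differentiableAt (Om_open M) (mix_smooth (Om_open M) hVs 0 (k + 1)) hp)
        (rstar_deriv hr).neg (inv_deriv (by linarith)) rfl
      rw [D1_mix, D2_mix_zero] at this
      exact this.deriv
    have hrel := hrel 0 _ hp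
    simp only [hder] at *
    generalize mix V 0 (k + 2) (-rstar M r, 1 / r) = w2 at *
    generalize mix V 0 (k + 1) (-rstar M r, 1 / r) = w1 at *
    generalize mix V 0 k (-rstar M r, 1 / r) = w0 at *
    generalize mix V 0 (k - 1) (-rstar M r, 1 / r) = wm at *
    have hx : mix V 1 (k + 1) (-rstar M r, 1 / r) = (1 / 2) * ((a0 + a1 * (1 / r)) * w0 + b * wm
        - qN M (1 / r) * w2 - (k + 1) * qN' M (1 / r) * w1) := by
      rw [← hrel]; ring_nf
    rw [hx]
    unfold qN qN'
    have : 1 - 2 * M * (1 / r) = (r - 2 * M) / r := by field_simp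
    rw [this, sub_zero]
    field_simp
    ring

/-! ### Integration along incoming characteristics -/

section far
variable {M ρ ρ' : ℝ}

theorem far_mem (hM : 0 < M) (hρ : ρ ∈ Ioc 0 (1 / (4 * M))) : ρ ∈ Ioo 0 (1 / (2 * M)) :=
  ⟨hρ.1, hρ.2.trans_lt (one_div_lt_one_div_of_lt (by linarith) (by linarith))⟩

theorem far_mul (hM : 0 < M) (hρ : ρ ∈ Ioc 0 (1 / (4 * M))) : 4 * M * ρ ≤ 1 := by
  have := (le_div_iff₀ (by positivity)).1 hρ.2
  linarith

theorem far_inv (hM : 0 < M) (hρ : ρ ∈ Ioc 0 (1 / (4 * M))) : 4 * M ≤ 1 / ρ := by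
  rw [le_div_iff₀ hρ.1]; exact far_mul hM hρ

theorem far_top (hM : 0 < M) : 1 / (4 * M) ∈ Ioc 0 (1 / (4 * M)) := ⟨by positivity, le_rfl⟩

theorem sN_anti (hM : 0 < M) (h0 : 0 < ρ) (h : ρ ≤ ρ') (hρ' : ρ' ∈ Ioc 0 (1 / (4 * M))) :
    sN M ρ' ≤ sN M ρ := by
  have h1 : 1 / ρ' ≤ 1 / ρ := one_div_le_one_div_of_le h0 h
  have h2 := far_inv hM hρ'
  unfold sN rstar
  have := Real.log_le_log (x := 1 / ρ' - 2 * M) (y := 1 / ρ - 2 * M) (by linarith) (by linarith)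
  nlinarith

/-- `ρ²(1 - 2Mρ)` is increasing up to `ρ = 1/(3M)`, in particular up to `1/(4M)`. -/
theorem qN_mono (hM : 0 < M) (h0 : 0 < ρ) (h : ρ ≤ ρ') (hρ' : ρ' ∈ Ioc 0 (1 / (4 * M))) :
    qN M ρ ≤ qN M ρ' := by
  have h2 := far_mul hM hρ'
  have h1 : 4 * M * ρ ≤ 1 := by nlinarith
  unfold qN
  have : 0 ≤ (ρ' - ρ) * (ρ * (1 - 4 * M * ρ) + ρ' * (1 - 4 * M * ρ') + ρ * (1 - 4 * M * ρ') + ρ') :=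
    mul_nonneg (by linarith) (add_nonneg (add_nonneg (add_nonneg
      (mul_nonneg h0.le (by linarith)) (mul_nonneg hρ'.1.le (by linarith)))
      (mul_nonneg h0.le (by linarith))) hρ'.1.le)
  linarith

/-- `r_*` is at least `r` up to a constant when `r ≥ 4M`. -/
theorem sN_ge (hM : 0 < M) (hρ : ρ ∈ Ioc 0 (1 / (4 * M))) :
    1 / ρ + 2 * M * Real.log (2 * M) ≤ sN M ρ := by
  have h2 := far_inv hM hρ
  unfold sN rstar
  have := Real.log_le_log (x := 2 * M) (y := 1 / ρ - 2 * M) (by linarith) (by linarith)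
  nlinarith

/-- `T + 1 + r_*` is at most a constant multiple of `r` when `r ≥ 4M`. -/
theorem sN_mul_le (hM : 0 < M) {T : ℝ} (hT : 0 ≤ T) (hρ : ρ ∈ Ioc 0 (1 / (4 * M))) :
    (T + 1 + sN M ρ) * ρ ≤ (T + 1) / (4 * M) + 1 + 2 * M := by
  have h2 := far_inv hM hρ
  have h3 : sN M ρ ≤ 1 / ρ + 2 * M * (1 / ρ) := by
    unfold sN rstar
    have := Real.log_le_sub_one_of_pos (x := 1 / ρ - 2 * M) (by linarith)
    have : Real.log (1 / ρ - 2 * M) ≤ 1 / ρ := by linarith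
    nlinarith
  have h4 : (T + 1) * ρ ≤ (T + 1) / (4 * M) := by
    rw [div_eq_mul_one_div]; exact mul_le_mul_of_nonneg_left hρ.2 (by linarith)
  have h5 : sN M ρ * ρ ≤ 1 + 2 * M := by
    have h6 := mul_le_mul_of_nonneg_right h3 hρ.1.le
    have h7 : (1 / ρ + 2 * M * (1 / ρ)) * ρ = 1 + 2 * M := by
      have := hρ.1.ne'
      field_simp
    linarith
  linarith

theorem sN_cont (hM : 0 < M) (h0 : 0 < ρ) (hρ' : ρ' ∈ Ioc 0 (1 / (4 * M))) :
    ContinuousOn (sN M) (Icc ρ ρ') := fun x hx =>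
  (sN_deriv hM (far_mem hM ⟨h0.trans_le hx.1, hx.2.trans hρ'.2⟩)).continuousAt.continuousWithinAt

/-- The tortoise coordinate takes every value above `s(ρ)` at a point closer to infinity. -/
theorem exists_sN (hM : 0 < M) (hρ : ρ ∈ Ioc 0 (1 / (4 * M))) {x : ℝ} (hx : sN M ρ ≤ x) :
    ∃ σ, 0 < σ ∧ σ ≤ ρ ∧ sN M σ = x := by
  set R := |x| + |2 * M * Real.log (2 * M)| + 1 with hR
  have hR0 : 0 < R := by positivity
  set σ := min ρ (1 / R) with hσ
  have hσ0 : 0 < σ := lt_min hρ.1 (by positivity)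
  have hσρ : σ ≤ ρ := min_le_left _ _
  have h1 : R ≤ 1 / σ := by
    rw [le_div_iff₀ hσ0, mul_comm, ← le_div_iff₀ hR0]; exact min_le_right _ _
  have h2 := sN_ge hM (ρ := σ) ⟨hσ0, hσρ.trans hρ.2⟩
  have h3 : x ≤ sN M σ := by
    linarith [le_abs_self x, neg_abs_le (2 * M * Real.log (2 * M))]
  obtain ⟨y, hy, hyx⟩ := intermediate_value_Icc' hσρ (sN_cont hM hσ0 hρ) ⟨hx, h3⟩
  exact ⟨y, hσ0.trans_le hy.1, hy.2, hyx⟩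

end far

/-- The part of the far region `r ≥ 4M` that lies in the future `t ≥ 0` of the initial surface and
has retarded time `τ̄ ≤ T`. Note `t = τ̄ + s(ρ̄)`. -/
def Reg (M T : ℝ) : Set (ℝ × ℝ) :=
  {p | p.2 ∈ Ioc 0 (1 / (4 * M)) ∧ p.1 ≤ T ∧ 0 ≤ p.1 + sN M p.2}

theorem Reg_mem {M T : ℝ} (hM : 0 < M) {p : ℝ × ℝ} (hp : p ∈ Reg M T) : p ∈ Om M :=
  ⟨trivial, far_mem hM hp.1⟩

/-- Integration along an incoming characteristic. The curves `τ̄ + 2 s(ρ̄) = P` (constant `t + r_*`)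
are the integral curves of `2 ∂_τ̄ + q ∂_ρ̄`, and along them `q^(j+1) W` has `ρ̄`-derivative
`q^j E`. Following the curve in the direction of decreasing `ρ̄`, it meets the initial surface at
a point `ρ₁`. Since `q` is increasing, the factors of `q` can be discarded, and decay of `E` of
order `n + 2` in `T + 1 - τ̄` gives decay of `W` of order `n + 1` with a gain `1/(2(n + 1))`. -/
theorem transport {M T : ℝ} (hM : 0 < M) {W E : ℝ × ℝ → ℝ} (hW : ContDiffOn ℝ ∞ W (Om M))
    {j n : ℕ}
    (hE : ∀ p ∈ Om M, 2 * D1 W p + qN M p.2 * D2 W p + (j + 1) * qN' M p.2 * W p = E p)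
    {D A : ℝ} (hD : ∀ ρ ∈ Ioc 0 (1 / (4 * M)), -sN M ρ ≤ T →
      |W (-sN M ρ, ρ)| * (T + 1 + sN M ρ) ^ (n + 1) ≤ D)
    {p : ℝ × ℝ} (hp : p ∈ Reg M T)
    (hA : ∀ p' ∈ Reg M T, p'.1 + 2 * sN M p'.2 = p.1 + 2 * sN M p.2 →
      |E p'| * (T + 1 - p'.1) ^ (n + 2) ≤ A) :
    |W p| * (T + 1 - p.1) ^ (n + 1) ≤ D + A / (2 * (n + 1)) := by
  obtain ⟨τ, ρ⟩ := p
  obtain ⟨hρ, hT, ht⟩ := hp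
  dsimp only at *
  set P := τ + 2 * sN M ρ with hP
  -- `ρ₁` is the intersection with `t = 0`, where `τ̄ = -s(ρ₁)` and so `P = s(ρ₁)`
  obtain ⟨ρ₁, h0, hle, hs1⟩ := exists_sN hM hρ (x := P) (by linarith)
  have hX : 1 ≤ T + 1 - τ := by linarith
  have hA0 : 0 ≤ A := (hA (τ, ρ) ⟨hρ, hT, ht⟩ rfl).trans'
    (mul_nonneg (abs_nonneg _) (pow_nonneg (by linarith) _))
  have hfar : ∀ σ ∈ Icc ρ₁ ρ, σ ∈ Ioc 0 (1 / (4 * M)) := fun σ hσ =>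
    ⟨h0.trans_le hσ.1, hσ.2.trans hρ.2⟩
  have hreg : ∀ σ ∈ Icc ρ₁ ρ, (P - 2 * sN M σ, σ) ∈ Reg M T := fun σ hσ => by
    have h1 := sN_anti hM (h0.trans_le hσ.1) hσ.2 hρ
    have h2 := sN_anti hM h0 hσ.1 (hfar σ hσ)
    refine ⟨hfar σ hσ, ?_, ?_⟩ <;> dsimp only <;> linarith
  have hτd : ∀ σ ∈ Icc ρ₁ ρ, HasDerivAt (fun x => P - 2 * sN M x) (2 / qN M σ) σ := fun σ hσ =>
    (((sN_deriv hM (far_mem hM (hfar σ hσ))).const_mul 2).const_sub P).congr_deriv (by ring)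
  have hfd : ∀ σ ∈ Icc ρ₁ ρ, HasDerivAt (fun x => qN M x ^ (j + 1) * W (P - 2 * sN M x, x))
      (qN M σ ^ j * E (P - 2 * sN M σ, σ)) σ := fun σ hσ => by
    have hm := Reg_mem hM (hreg σ hσ)
    have hq := (qN_pos hM hm.2).ne'
    have h1 := hasDerivAt_curve_s17 (smooth_differentiableAt (Om_open M) hW hm) (hτd σ hσ)
      (hasDerivAt_id σ) rfl
    refine (((qN_deriv (M := M) (ρ := σ)).pow (j + 1)).mul h1).congr_deriv ?_
    rw [← hE _ hm]
    dsimp only at hq ⊢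
    simp only [Nat.add_sub_cancel, Pi.pow_apply, id]
    push_cast
    field_simp
    ring
  have hXd : ∀ σ ∈ Icc ρ₁ ρ, 1 ≤ T + 1 - (P - 2 * sN M σ) := fun σ hσ => by
    have := (hreg σ hσ).2.1
    dsimp only at this; linarith
  set c := A * qN M ρ ^ (j + 1) / (2 * (n + 1)) with hc
  -- the comparison function: a primitive of the bound for the derivative of `q^(j+1) W`
  have hBd : ∀ σ ∈ Icc ρ₁ ρ, HasDerivAt
      (fun x => qN M ρ₁ ^ (j + 1) * |W (-sN M ρ₁, ρ₁)|
        + c * (1 / (T + 1 - (P - 2 * sN M x)) ^ (n + 1)))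
      (A * qN M ρ ^ (j + 1) / qN M σ / (T + 1 - (P - 2 * sN M σ)) ^ (n + 2)) σ := fun σ hσ => by
    have hX0 : T + 1 - (P - 2 * sN M σ) ≠ 0 := by linarith [hXd σ hσ]
    have hq := (qN_pos hM (far_mem hM (hfar σ hσ))).ne'
    have hn : (n : ℝ) + 1 ≠ 0 := by positivity
    refine ((((hasDerivAt_const σ (1 : ℝ)).div (((hτd σ hσ).const_sub (T + 1)).pow (n + 1))
      (pow_ne_zero _ hX0)).const_mul c).const_add _).congr_deriv ?_
    simp only [hc, Nat.add_sub_cancel, Pi.pow_apply]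
    push_cast
    field_simp
    ring
  have hbound := image_norm_le_of_norm_deriv_right_le_deriv_boundary'
    (f := fun x => qN M x ^ (j + 1) * W (P - 2 * sN M x, x)) (a := ρ₁) (b := ρ)
    (fun σ hσ => (hfd σ hσ).continuousAt.continuousWithinAt)
    (fun σ hσ => (hfd σ ⟨hσ.1, hσ.2.le⟩).hasDerivWithinAt)
    (by
      have hX0 : 0 < T + 1 - (P - 2 * sN M ρ₁) := by linarith [hXd ρ₁ ⟨le_rfl, hle⟩]
      have hq := qN_pos hM (far_mem hM (hfar ρ₁ ⟨le_rfl, hle⟩))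
      have hqρ := qN_pos hM (far_mem hM hρ)
      have e : P - 2 * sN M ρ₁ = -sN M ρ₁ := by linarith
      rw [norm_mul, Real.norm_eq_abs, Real.norm_eq_abs, abs_of_pos (pow_pos hq _), e]
      rw [e] at hX0
      exact le_add_of_nonneg_right (by positivity))
    (fun σ hσ => (hBd σ hσ).continuousAt.continuousWithinAt)
    (fun σ hσ => (hBd σ ⟨hσ.1, hσ.2.le⟩).hasDerivWithinAt)
    (fun σ hσ => by
      have hσ' : σ ∈ Icc ρ₁ ρ := ⟨hσ.1, hσ.2.le⟩
      have hX0 : 0 < T + 1 - (P - 2 * sN M σ) := by linarith [hXd σ hσ']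
      have hq := qN_pos hM (far_mem hM (hfar σ hσ'))
      have hqle := qN_mono hM (h0.trans_le hσ.1) hσ.2.le hρ
      have hEA := hA _ (hreg σ hσ') (by dsimp only; ring)
      dsimp only at hEA
      rw [norm_mul, Real.norm_eq_abs, Real.norm_eq_abs, abs_of_pos (pow_pos hq _),
        le_div_iff₀ (by positivity), le_div_iff₀ hq]
      calc qN M σ ^ j * |E (P - 2 * sN M σ, σ)| * (T + 1 - (P - 2 * sN M σ)) ^ (n + 2) * qN M σ
          = (|E (P - 2 * sN M σ, σ)| * (T + 1 - (P - 2 * sN M σ)) ^ (n + 2))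
            * qN M σ ^ (j + 1) := by ring
        _ ≤ A * qN M ρ ^ (j + 1) :=
          mul_le_mul hEA (pow_le_pow_left₀ hq.le hqle _) (by positivity) hA0)
    (x := ρ) ⟨hle, le_rfl⟩
  have hqρ := qN_pos hM (far_mem hM hρ)
  have hq1 := qN_pos hM (far_mem hM (hfar ρ₁ ⟨le_rfl, hle⟩))
  have hqle := qN_mono hM h0 hle hρ
  have eτ : P - 2 * sN M ρ = τ := by rw [hP]; ring
  rw [norm_mul, Real.norm_eq_abs, Real.norm_eq_abs, abs_of_pos (pow_pos hqρ _), eτ] at hbound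
  have hX0 : 0 < (T + 1 - τ) ^ (n + 1) := by positivity
  have hW1 : |W (τ, ρ)| ≤ |W (-sN M ρ₁, ρ₁)| + A / (2 * (n + 1)) * (1 / (T + 1 - τ) ^ (n + 1)) := by
    have h1 : qN M ρ₁ ^ (j + 1) * |W (-sN M ρ₁, ρ₁)| ≤ qN M ρ ^ (j + 1) * |W (-sN M ρ₁, ρ₁)| :=
      mul_le_mul_of_nonneg_right (pow_le_pow_left₀ hq1.le hqle _) (abs_nonneg _)
    refine le_of_mul_le_mul_left (hbound.trans ((add_le_add_left h1 _).trans (le_of_eq ?_)))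
      (pow_pos hqρ (j + 1))
    rw [hc]; ring
  have hD1 := hD ρ₁ (hfar ρ₁ ⟨le_rfl, hle⟩) (by linarith)
  have hD2 : |W (-sN M ρ₁, ρ₁)| * (T + 1 - τ) ^ (n + 1) ≤ D :=
    hD1.trans' (mul_le_mul_of_nonneg_left (pow_le_pow_left₀ (by linarith) (by linarith) _)
      (abs_nonneg _))
  have h2 := mul_le_mul_of_nonneg_right hW1 hX0.le
  rw [add_mul, mul_assoc (A / _), one_div_mul_cancel hX0.ne', mul_one] at h2
  linarith

/-! ### Decay and local bounds -/

/-- Decay of `F` along the part `τ̄ ≤ T` of the initial surface in the far region, faster than every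
power of `T + 1 - τ̄ = T + 1 + s(ρ̄)`. -/
def DataBound (M T : ℝ) (F : ℝ × ℝ → ℝ) : Prop :=
  ∀ n : ℕ, ∃ D, ∀ ρ ∈ Ioc 0 (1 / (4 * M)), -sN M ρ ≤ T →
    |F (-sN M ρ, ρ)| * (T + 1 + sN M ρ) ^ n ≤ D

/-- Decay of `F` on `Reg M T`, faster than every power of `T + 1 - τ̄`, uniformly in `ρ̄`. -/
def RegBound (M T : ℝ) (F : ℝ × ℝ → ℝ) : Prop :=
  ∀ n : ℕ, ∃ A, ∀ p ∈ Reg M T, |F p| * (T + 1 - p.1) ^ n ≤ A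

theorem DataBound.of_dec {M T : ℝ} (hM : 0 < M) (hT : 0 ≤ T) {F : ℝ × ℝ → ℝ}
    (h : Dec M 0 (fun r => F (-rstar M r, 1 / r))) : DataBound M T F := by
  intro n
  obtain ⟨C, hC⟩ := h.bound n
  set K := (T + 1) / (4 * M) + 1 + 2 * M with hK
  have hK0 : 0 < K := by positivity
  refine ⟨C * K ^ n, fun ρ hρ hs => ?_⟩
  have h1 := hC (1 / ρ) (far_inv hM hρ)
  rw [one_div_one_div] at h1
  have h2 : T + 1 + sN M ρ ≤ K * (1 / ρ) := by
    rw [mul_one_div, le_div_iff₀ hρ.1]; exact sN_mul_le hM hT hρ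
  have h3 : (T + 1 + sN M ρ) ^ n ≤ (K * (1 / ρ)) ^ n :=
    pow_le_pow_left₀ (by linarith) h2 n
  calc |F (-sN M ρ, ρ)| * (T + 1 + sN M ρ) ^ n
      ≤ |F (-sN M ρ, ρ)| * (K * (1 / ρ)) ^ n :=
        mul_le_mul_of_nonneg_left h3 (abs_nonneg _)
    _ = |F (-rstar M (1 / ρ), ρ)| * (1 / ρ) ^ n * K ^ n := by rw [mul_pow, sN]; ring
    _ ≤ C * K ^ n := mul_le_mul_of_nonneg_right h1 (by positivity)

/-- It suffices to prove decay of arbitrarily high orders, because `T + 1 - τ̄ ≥ 1` on `Reg M T`. -/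
theorem RegBound.mono {M T : ℝ} {F : ℝ × ℝ → ℝ}
    (h : ∀ n₀ : ℕ, ∃ n, n₀ ≤ n ∧ ∃ A, ∀ p ∈ Reg M T, |F p| * (T + 1 - p.1) ^ n ≤ A) :
    RegBound M T F := by
  intro n₀
  obtain ⟨n, hn, A, hA⟩ := h n₀
  refine ⟨A, fun p hp => (hA p hp).trans' ?_⟩
  have := hp.2.1
  exact mul_le_mul_of_nonneg_left (pow_le_pow_right₀ (by linarith) hn) (abs_nonneg _)

/-- A function that is known to be bounded, and whose bounds `A` improve to `D + A / 2`, is bounded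
by `2 * D`, whatever the initial bound was. -/
theorem halving {S : Set (ℝ × ℝ)} {f : ℝ × ℝ → ℝ} {B D : ℝ} (hf : ∀ p ∈ S, 0 ≤ f p)
    (hB : ∀ p ∈ S, f p ≤ B)
    (hs : ∀ A, 0 ≤ A → (∀ p ∈ S, f p ≤ A) → ∀ p ∈ S, f p ≤ D + A / 2) :
    ∀ p ∈ S, f p ≤ 2 * D := by
  intro p hp
  have hbdd : BddAbove (f '' S) := ⟨B, by rintro _ ⟨q, hq, rfl⟩; exact hB q hq⟩
  have h1 : ∀ q ∈ S, f q ≤ sSup (f '' S) := fun q hq => le_csSup hbdd ⟨q, hq, rfl⟩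
  have h2 : sSup (f '' S) ≤ D + sSup (f '' S) / 2 := by
    refine csSup_le ⟨_, p, hp, rfl⟩ ?_
    rintro _ ⟨q, hq, rfl⟩
    exact hs _ ((hf p hp).trans (h1 p hp)) h1 q hq
  linarith [h1 p hp]

/-- A smooth function on the exterior is bounded on a box away from `ρ̄ = 0`. -/
theorem compact_bound {M : ℝ} (hM : 0 < M) {F : ℝ × ℝ → ℝ} (hF : ContDiffOn ℝ ∞ F (Om M))
    (a b : ℝ) {ρ₀ : ℝ} (h0 : 0 < ρ₀) :
    ∃ B, ∀ p : ℝ × ℝ, p.1 ∈ Icc a b → p.2 ∈ Icc ρ₀ (1 / (4 * M)) → |F p| ≤ B := by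
  have hsub : Icc a b ×ˢ Icc ρ₀ (1 / (4 * M)) ⊆ Om M := fun p hp =>
    ⟨trivial, far_mem hM ⟨h0.trans_le hp.2.1, hp.2.2⟩⟩
  obtain ⟨B, hB⟩ := (isCompact_Icc.prod isCompact_Icc).exists_bound_of_continuousOn
    (hF.continuousOn.mono hsub)
  exact ⟨B, fun p h1 h2 => hB p ⟨h1, h2⟩⟩

/-- The mean value inequality in `ρ̄`, at fixed `τ̄`. -/
theorem mvt {M : ℝ} (hM : 0 < M) {F : ℝ × ℝ → ℝ} (hF : ContDiffOn ℝ ∞ F (Om M))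
    {τ ρ ρ' B : ℝ} (h0 : 0 < ρ) (hle : ρ ≤ ρ') (hρ' : ρ' ∈ Ioc 0 (1 / (4 * M)))
    (hB : ∀ σ ∈ Icc ρ ρ', |D2 F (τ, σ)| ≤ B) :
    |F (τ, ρ)| ≤ |F (τ, ρ')| + B * ρ' := by
  have h := (convex_Icc ρ ρ').norm_image_sub_le_of_norm_hasDerivWithin_le
    (f := fun x => F (τ, x)) (f' := fun x => D2 F (τ, x)) (C := B) (x := ρ') (y := ρ)
    (fun x hx => (D2_eq (p := (τ, x)) (smooth_differentiableAt (Om_open M) hF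
      ⟨trivial, far_mem hM ⟨h0.trans_le hx.1, hx.2.trans hρ'.2⟩⟩)).hasDerivWithinAt)
    hB ⟨hle, le_rfl⟩ ⟨le_rfl, hle⟩
  have hB0 : 0 ≤ B := (abs_nonneg _).trans (hB ρ ⟨le_rfl, hle⟩)
  simp only [Real.norm_eq_abs] at h
  rw [abs_sub_comm ρ ρ', abs_of_nonneg (sub_nonneg.2 hle)] at h
  have h1 : B * (ρ' - ρ) ≤ B * ρ' := mul_le_mul_of_nonneg_left (by linarith) hB0
  have h2 := abs_sub_abs_le_abs_sub (F (τ, ρ)) (F (τ, ρ'))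
  linarith

section main
variable {M T l : ℝ} {V : ℝ × ℝ → ℝ}

/-- From each point of `Reg M T`, moving inwards (towards larger `ρ̄`) at fixed `τ̄`, one stays in
`Reg M T` until the initial surface or the edge `ρ̄ = 1/(4M)` is reached. There `V` decays: by
hypothesis on the initial surface, and by compactness of `-s(1/(4M)) ≤ τ̄ ≤ T` on the edge. -/
theorem start_point (hM : 0 < M) (hV : ContDiffOn ℝ ∞ V (Om M))
    (hdat : DataBound M T V) (n : ℕ) :
    ∃ D, 0 ≤ D ∧ ∀ p ∈ Reg M T, ∃ ρ' ∈ Ioc 0 (1 / (4 * M)), p.2 ≤ ρ' ∧ 0 ≤ p.1 + sN M ρ' ∧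
      |V (p.1, ρ')| * (T + 1 - p.1) ^ n ≤ D := by
  obtain ⟨D, hD⟩ := hdat n
  set s := sN M (1 / (4 * M)) with hs
  obtain ⟨B, hB⟩ := compact_bound hM hV (-s) T (far_top hM).1
  refine ⟨max 0 (max D (B * (T + 1 + s) ^ n)), le_max_left _ _, ?_⟩
  rintro ⟨τ, ρ⟩ ⟨hρ, hτ, hp⟩
  dsimp only at *
  rcases le_total s (-τ) with h | h
  · obtain ⟨ρ', hρ', e⟩ := intermediate_value_Icc' hρ.2 (sN_cont hM hρ.1 (far_top hM))
      (show -τ ∈ Icc _ _ from ⟨h, by linarith⟩)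
    have hf : ρ' ∈ Ioc 0 (1 / (4 * M)) := ⟨hρ.1.trans_le hρ'.1, hρ'.2⟩
    refine ⟨ρ', hf, hρ'.1, by linarith, ?_⟩
    have := hD ρ' hf (by linarith)
    rw [e, neg_neg, ← sub_eq_add_neg] at this
    exact this.trans ((le_max_left _ _).trans (le_max_right _ _))
  · refine ⟨1 / (4 * M), far_top hM, hρ.2, by linarith, ?_⟩
    refine le_trans ?_ ((le_max_right _ _).trans (le_max_right _ _))
    exact mul_le_mul (hB _ ⟨by linarith, hτ⟩ ⟨le_rfl, le_rfl⟩)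
      (pow_le_pow_left₀ (by linarith) (by linarith) n) (pow_nonneg (by linarith) n)
      ((abs_nonneg _).trans (hB (τ, 1 / (4 * M)) ⟨by linarith, hτ⟩ ⟨le_rfl, le_rfl⟩))

/-- Decay of `V` itself. Assume `|V| (T + 1 - τ̄)^(n+2) ≤ A`. The wave equation and `transport` give
decay of `∂_ρ̄ V` of order `n + 1` with constant about `G A / (2(n + 1))`. Integration in `ρ̄` from
`start_point`, over a length at most `K / (T + 1 - τ̄)`, recovers order `n + 2` for `V` with
constant `D + K G A / (2(n + 1))`, which is at most `D + A / 2` once `n + 1 ≥ K G`. To have some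
finite bound to start from, the argument is run on the part `t + r_* ≤ P` of the region, which
stays away from `ρ̄ = 0`; the resulting constant does not depend on `P`. -/
theorem base_bound_s17 (hM : 0 < M) (hT : 0 ≤ T) (hl : 0 ≤ l) (hV : ContDiffOn ℝ ∞ V (Om M))
    (hw : ∀ p ∈ Om M, 2 * D1 (D2 V) p + qN M p.2 * D2 (D2 V) p + qN' M p.2 * D2 V p
      = (l + 2 * M * p.2) * V p)
    (hdat : DataBound M T V) (hdat1 : DataBound M T (D2 V)) : RegBound M T V := by
  set K := (T + 1) / (4 * M) + 1 + 2 * M with hK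
  have hK0 : 0 < K := by positivity
  set G := l + 1 with hG
  have hG0 : 0 < G := by positivity
  refine RegBound.mono fun n₀ => ?_
  obtain ⟨m, hm⟩ := exists_nat_ge (K * G)
  set n := max n₀ m with hn
  have hnK : K * G ≤ n + 1 := by
    have : (m : ℝ) ≤ n := by exact_mod_cast le_max_right _ _
    linarith
  refine ⟨n + 2, by omega, ?_⟩
  obtain ⟨D0, hD0, hstart⟩ := start_point hM hV hdat (n + 2)
  obtain ⟨D1', hD1⟩ := hdat1 (n + 1)
  set Dd := max D1' 0 with hDd
  refine ⟨2 * (D0 + K * Dd), fun p₀ hp₀ => ?_⟩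
  set P := p₀.1 + 2 * sN M p₀.2 with hP
  set S := {p | p ∈ Reg M T ∧ p.1 + 2 * sN M p.2 ≤ P} with hS
  set R := |P| + |2 * M * Real.log (2 * M)| + 1 with hR
  have hR0 : 0 < R := by positivity
  obtain ⟨B, hB⟩ := compact_bound hM hV (-P) T (ρ₀ := 1 / R) (by positivity)
  have hSb : ∀ p ∈ S, p.1 ∈ Icc (-P) T ∧ p.2 ∈ Icc (1 / R) (1 / (4 * M)) := by
    rintro ⟨τ, ρ⟩ ⟨⟨hρ, hτ, hp⟩, hp'⟩
    dsimp only at *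
    have hs : sN M ρ ≤ P := by linarith
    refine ⟨⟨by linarith, hτ⟩, ?_, hρ.2⟩
    have h2 := sN_ge hM hρ
    rw [div_le_iff₀ hR0, mul_comm, ← div_le_iff₀ hρ.1]
    linarith [le_abs_self P, neg_abs_le (2 * M * Real.log (2 * M))]
  refine halving (S := S) (f := fun p => |V p| * (T + 1 - p.1) ^ (n + 2))
    (B := B * (T + 1 + P) ^ (n + 2)) ?_ ?_ ?_ p₀ ⟨hp₀, le_rfl⟩
  · intro p hp
    exact mul_nonneg (abs_nonneg _) (pow_nonneg (by linarith [hp.1.2.1]) _)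
  · intro p hp
    obtain ⟨h1, h2⟩ := hSb p hp
    exact mul_le_mul (hB p h1 h2) (pow_le_pow_left₀ (by linarith [h1.2]) (by linarith [h1.1]) _)
      (pow_nonneg (by linarith [h1.2]) _) ((abs_nonneg _).trans (hB p h1 h2))
  · intro A hA0 hA p hpS
    have hp := hpS.1
    have hX : 1 ≤ T + 1 - p.1 := by linarith [hp.2.1]
    obtain ⟨ρ', hρ', hle, hs', hstart'⟩ := hstart p hp
    have hX0 : 0 < (T + 1 - p.1) ^ (n + 1) := by positivity
    have hXρ : (T + 1 - p.1) * ρ' ≤ K :=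
      (sN_mul_le hM hT hρ').trans' (mul_le_mul_of_nonneg_right (by linarith) hρ'.1.le)
    set Z := Dd + G * A / (2 * (n + 1)) with hZ
    have hZ0 : 0 ≤ Z := by positivity
    have hder : ∀ σ ∈ Icc p.2 ρ', |D2 V (p.1, σ)| ≤ Z / (T + 1 - p.1) ^ (n + 1) := by
      intro σ hσ
      have hσf : σ ∈ Ioc 0 (1 / (4 * M)) := ⟨hp.1.1.trans_le hσ.1, hσ.2.trans hρ'.2⟩
      have hσs := sN_anti hM hσf.1 hσ.2 hρ'
      have hσs' := sN_anti hM hp.1.1 hσ.1 hσf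
      rw [le_div_iff₀ hX0]
      refine transport (p := (p.1, σ)) hM (D2_smooth (Om_open M) hV) (j := 0) (n := n)
        (E := fun p => (l + 2 * M * p.2) * V p) ?_ ?_ ⟨hσf, hp.2.1, by dsimp only; linarith⟩ ?_
      · intro q hq
        rw [← hw q hq]; push_cast; ring
      · exact fun ρ hρ h => (hD1 ρ hρ h).trans (le_max_left _ _)
      · intro q hq hqP
        dsimp only at hqP
        have h1 := hA q ⟨hq, by linarith [hpS.2]⟩
        have h2 := far_mul hM hq.1
        have h3 : 0 ≤ 2 * M * q.2 := mul_nonneg (by positivity) hq.1.1.le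
        have h4 : |l + 2 * M * q.2| ≤ G := by rw [abs_of_nonneg (by linarith)]; linarith
        rw [abs_mul, mul_assoc]
        exact mul_le_mul h4 h1
          (mul_nonneg (abs_nonneg _) (pow_nonneg (by linarith [hq.2.1]) _)) hG0.le
    have h1 := mvt hM hV hp.1.1 hle hρ' hder
    have h2 : |V p| * (T + 1 - p.1) ^ (n + 2)
        ≤ |V (p.1, ρ')| * (T + 1 - p.1) ^ (n + 2) + Z * ((T + 1 - p.1) * ρ') := by
      refine (mul_le_mul_of_nonneg_right h1 (by positivity)).trans (le_of_eq ?_)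
      rw [pow_succ _ (n + 1)]
      field_simp
    have h3 : Z * ((T + 1 - p.1) * ρ') ≤ Z * K := mul_le_mul_of_nonneg_left hXρ hZ0
    have h4 : G * A / (2 * (n + 1)) * K ≤ A / 2 := by
      rw [div_mul_eq_mul_div, div_le_div_iff₀ (by positivity) (by positivity)]
      nlinarith [mul_le_mul_of_nonneg_right hnK hA0]
    have h5 : Z * K = K * Dd + G * A / (2 * (n + 1)) * K := by rw [hZ]; ring
    linarith

/-- Decay of all `∂_ρ̄^k V`, by `transport` applied to the differentiated wave equation, whose
right-hand side contains only derivatives of lower order. -/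
theorem reg_bound (hM : 0 < M) (hT : 0 ≤ T) (hl : 0 ≤ l) (hV : ContDiffOn ℝ ∞ V (Om M))
    (hw : ∀ p ∈ Om M, 2 * D1 (D2 V) p + qN M p.2 * D2 (D2 V) p + qN' M p.2 * D2 V p
      = (l + 2 * M * p.2) * V p)
    (hdat : ∀ k, DataBound M T (mix V 0 k)) (k : ℕ) : RegBound M T (mix V 0 k) := by
  induction k using Nat.strong_induction_on with
  | _ k ih =>
  rcases k with _ | j
  · exact base_bound_s17 hM hT hl hV hw (hdat 0) (hdat 1)
  · obtain ⟨a0, a1, b, hc⟩ := commuted hV hw j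
    refine RegBound.mono fun n => ⟨n + 1, by omega, ?_⟩
    obtain ⟨D, hD⟩ := hdat (j + 1) (n + 1)
    obtain ⟨A, hA⟩ := ih j (by omega) (n + 2)
    obtain ⟨A', hA'⟩ := ih (j - 1) (by omega) (n + 2)
    set g := |a0| + |a1| * (1 / (4 * M)) with hg
    refine ⟨D + (g * A + |b| * A') / (2 * (n + 1)), fun p hp => ?_⟩
    refine transport hM (mix_smooth (Om_open M) hV 0 (j + 1)) (j := j) (n := n)
      (E := fun p => (a0 + a1 * p.2) * mix V 0 j p + b * mix V 0 (j - 1) p) ?_ hD hp ?_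
    · intro q hq
      rw [← hc 0 q hq, D1_mix, D2_mix_zero]
    · intro q hq _
      have h1 : |a0 + a1 * q.2| ≤ g := by
        refine (abs_add_le _ _).trans ?_
        rw [abs_mul, abs_of_pos hq.1.1]
        exact add_le_add_right (mul_le_mul_of_nonneg_left hq.1.2 (abs_nonneg _)) _
      have hX : 0 ≤ (T + 1 - q.1) ^ (n + 2) := pow_nonneg (by linarith [hq.2.1]) _
      have hg0 : 0 ≤ g := by positivity
      calc |(a0 + a1 * q.2) * mix V 0 j q + b * mix V 0 (j - 1) q| * (T + 1 - q.1) ^ (n + 2)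
          ≤ (|a0 + a1 * q.2| * |mix V 0 j q| + |b| * |mix V 0 (j - 1) q|)
            * (T + 1 - q.1) ^ (n + 2) := by
            rw [← abs_mul, ← abs_mul]
            exact mul_le_mul_of_nonneg_right (abs_add_le _ _) hX
        _ = |a0 + a1 * q.2| * (|mix V 0 j q| * (T + 1 - q.1) ^ (n + 2))
            + |b| * (|mix V 0 (j - 1) q| * (T + 1 - q.1) ^ (n + 2)) := by ring
        _ ≤ g * A + |b| * A' := add_le_add
            (mul_le_mul h1 (hA q hq) (mul_nonneg (abs_nonneg _) hX) hg0)
            (mul_le_mul_of_nonneg_left (hA' q hq) (abs_nonneg _))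

/-- All mixed derivatives of `V` are bounded for `|τ̄| ≤ T` up to null infinity. For `a = 0` this is
`reg_bound` close to null infinity, where `t ≥ 0`, and compactness elsewhere. For higher `a` the
differentiated wave equation expresses `∂_τ̄^(a+1) ∂_ρ̄^(j+1) V` through derivatives with `a`
derivatives in `τ̄`, and the case without `∂_ρ̄` follows by integration from `ρ̄ = 1/(4M)`. -/
theorem local_bound (hM : 0 < M) (hl : 0 ≤ l) (hV : ContDiffOn ℝ ∞ V (Om M))
    (hw : ∀ p ∈ Om M, 2 * D1 (D2 V) p + qN M p.2 * D2 (D2 V) p + qN' M p.2 * D2 V p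
      = (l + 2 * M * p.2) * V p)
    (hdat : ∀ T, 0 ≤ T → ∀ k, DataBound M T (mix V 0 k)) (a k : ℕ) (T : ℝ) :
    ∃ C, ∀ p : ℝ × ℝ, |p.1| ≤ T → p.2 ∈ Ioc 0 (1 / (4 * M)) → |mix V a k p| ≤ C := by
  rcases lt_or_ge T 0 with hT | hT
  · exact ⟨0, fun p hp => absurd hp (by linarith [abs_nonneg p.1])⟩
  induction a generalizing k with
  | zero =>
    obtain ⟨ρs, h0, hle, hs⟩ := exists_sN hM (far_top hM) (le_max_left (sN M (1 / (4 * M))) T)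
    obtain ⟨A, hA⟩ := reg_bound hM hT hl hV hw (hdat T hT) k 0
    obtain ⟨B, hB⟩ := compact_bound hM (mix_smooth (Om_open M) hV 0 k) (-T) T h0
    refine ⟨max A B, fun p h1 h2 => ?_⟩
    have h1' := abs_le.1 h1
    rcases le_total p.2 ρs with h | h
    · have h3 := sN_anti hM h2.1 h ⟨h0, hle⟩
      have h4 : T ≤ sN M ρs := by rw [hs]; exact le_max_right _ _
      have h5 := hA p ⟨h2, h1'.2, by linarith⟩
      rw [pow_zero, mul_one] at h5
      exact h5.trans (le_max_left _ _)
    · exact (hB p h1' ⟨h, h2.2⟩).trans (le_max_right _ _)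
  | succ a ih =>
    have hsucc : ∀ j, ∃ C, ∀ p : ℝ × ℝ, |p.1| ≤ T → p.2 ∈ Ioc 0 (1 / (4 * M)) →
        |mix V (a + 1) (j + 1) p| ≤ C := by
      intro j
      obtain ⟨a0, a1, b, hc⟩ := commuted hV hw j
      obtain ⟨C0, hC0⟩ := ih j
      obtain ⟨C1, hC1⟩ := ih (j - 1)
      obtain ⟨C2, hC2⟩ := ih (j + 1)
      obtain ⟨C3, hC3⟩ := ih (j + 2)
      obtain ⟨Q, hQ⟩ := (isCompact_Icc (a := (0 : ℝ)) (b := 1 / (4 * M))).exists_bound_of_continuousOn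
        (f := qN M) (by unfold qN; fun_prop)
      obtain ⟨Q', hQ'⟩ := (isCompact_Icc (a := (0 : ℝ)) (b := 1 / (4 * M))).exists_bound_of_continuousOn
        (f := fun ρ => (j + 1) * qN' M ρ) (by unfold qN'; fun_prop)
      obtain ⟨Q0, hQ0⟩ := (isCompact_Icc (a := (0 : ℝ)) (b := 1 / (4 * M))).exists_bound_of_continuousOn
        (f := fun ρ => a0 + a1 * ρ) (by fun_prop)
      refine ⟨Q0 * C0 + |b| * C1 + Q * C3 + Q' * C2, fun p h1 h2 => ?_⟩
      have h2' : p.2 ∈ Icc 0 (1 / (4 * M)) := ⟨h2.1.le, h2.2⟩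
      have e := hc a p ⟨trivial, far_mem hM h2⟩
      have key : ∀ {x y X Y : ℝ}, |x| ≤ X → |y| ≤ Y → |x * y| ≤ X * Y := fun hx hy => by
        rw [abs_mul]
        exact mul_le_mul hx hy (abs_nonneg _) ((abs_nonneg _).trans hx)
      have k0 := abs_le.1 (key (hQ0 _ h2') (hC0 p h1 h2))
      have k1 := abs_le.1 (key (le_refl |b|) (hC1 p h1 h2))
      have k3 := abs_le.1 (key (hQ _ h2') (hC3 p h1 h2))
      have k2 := abs_le.1 (key (hQ' _ h2') (hC2 p h1 h2))
      have habs : |2 * mix V (a + 1) (j + 1) p| ≤ Q0 * C0 + |b| * C1 + Q * C3 + Q' * C2 := by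
        rw [abs_le]; constructor <;> linarith
      rw [abs_mul, abs_two] at habs
      linarith [abs_nonneg (mix V (a + 1) (j + 1) p)]
    rcases k with _ | j
    · obtain ⟨C, hC⟩ := hsucc 0
      have hs := mix_smooth (Om_open M) hV (a + 1) 0
      obtain ⟨B, hB⟩ := compact_bound hM hs (-T) T (far_top hM).1
      refine ⟨B + C * (1 / (4 * M)), fun p h1 h2 => ?_⟩
      refine (mvt (τ := p.1) hM hs h2.1 h2.2 (far_top hM) fun σ hσ => ?_).trans
        (add_le_add_left (hB (p.1, 1 / (4 * M)) (abs_le.1 h1) ⟨le_rfl, le_rfl⟩) _)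
      have hσ' : σ ∈ Ioc 0 (1 / (4 * M)) := ⟨h2.1.trans_le hσ.1, hσ.2⟩
      rw [D2_mix (Om_open M) hV (a + 1) 0 (show (p.1, σ) ∈ Om M from ⟨trivial, far_mem hM hσ'⟩)]
      exact hC (p.1, σ) h1 hσ'
    · exact hsucc j

end main

/-! ### Smoothness up to null infinity -/

/-- Smoothness up to null infinity for data Schwartz at `r = ∞` (single mode,
Corollaries 3.8 and 3.11): if the initial data are rapidly decreasing at infinity
together with all derivatives, then the rescaled solution extends smoothly to all of
null infinity `{ρ̄ = 0}`. -/
theorem smooth_up_to_null_infinity_schwartz_data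
    (M lam : ℝ) (hM : 0 < M) (hlam : 0 ≤ lam)
    (u : ℝ → ℝ → ℝ) (hu : IsModeSolution M lam u)
    (hφdec : ∀ k N : ℕ, ∃ C : ℝ, ∀ r : ℝ, 4*M ≤ r →
      |iteratedDeriv k (fun s => u 0 s) r| ≤ C * r ^ (-(N:ℝ)))
    (hψdec : ∀ k N : ℕ, ∃ C : ℝ, ∀ r : ℝ, 4*M ≤ r →
      |iteratedDeriv k (fun s => pdt u 0 s) r| ≤ C * r ^ (-(N:ℝ))) :
    ∃ V' : ℝ → ℝ → ℝ,
      ContDiffOn ℝ ∞ (Function.uncurry V') ((Set.univ : Set ℝ) ×ˢ Set.Ico 0 (1/(2*M))) ∧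
      ∀ τ ρ : ℝ, ρ ∈ Set.Ioo 0 (1/(2*M)) → V' τ ρ = nullV M u τ ρ := by
  have hs : ContDiffOn ℝ ∞ (uncurry u) (Ou M) := hu.1
  have hline : ContDiffOn ℝ ∞ (fun r : ℝ => ((0 : ℝ), r)) (Ioi (2 * M)) :=
    contDiffOn_const.prodMk contDiffOn_id
  have hmaps : MapsTo (fun r : ℝ => ((0 : ℝ), r)) (Ioi (2 * M)) (Ou M) := fun r hr => ⟨trivial, hr⟩
  have hφs : ContDiffOn ℝ ∞ (fun r => u 0 r) (Ioi (2 * M)) := hs.comp hline hmaps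
  have hψs : ContDiffOn ℝ ∞ (fun r => pdt u 0 r) (Ioi (2 * M)) :=
    ((D1_smooth (Ou_open M) hs).comp hline hmaps).congr fun r hr => pdt_eq_s17 hs (hmaps hr)
  have hdec := data_dec hM hu (Dec.of_iteratedDeriv hM hφs hφdec)
    (Dec.of_iteratedDeriv hM hψs hψdec)
  have hV := nullV_smooth hM hs
  set V := uncurry (nullV M u) with hVdef
  have hbd := local_bound (l := lam ^ 2) hM (by positivity) hV (fun p hp => null_wave hM hu hp)
    (fun T hT k => DataBound.of_dec hM hT (hdec k 0))
  -- interior values are unchanged and values at `ρ̄ = 0` are boundary limits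
  refine ⟨fun τ ρ => extendFrom (Om M) V (τ, ρ), ?_, fun τ ρ hρ => ?_⟩
  · exact extend_smooth (c := 1 / (2 * M)) (c' := 1 / (4 * M)) (far_top hM).1
      (far_mem hM (far_top hM)).2 (mix V) (fun a b p hp => by
        have hp' : p ∈ Om M := ⟨trivial, hp⟩
        have h := hasFDerivAt_D (smooth_differentiableAt (Om_open M)
          (mix_smooth (Om_open M) hV a b) hp')
        rwa [D1_mix, D2_mix (Om_open M) hV a b hp'] at h) hbd
  · have hp : ((τ, ρ) : ℝ × ℝ) ∈ Om M := ⟨trivial, hρ⟩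
    exact extendFrom_eq (subset_closure hp) (hV.continuousOn _ hp)
end
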